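/- Gindikin-type characterization of positive Riesz distributions (generalized Wallach set): Let k > 0 and let R be a family of type-A Riesz distributions. For μ ∈ ℂ, the following are equivalent: (i) for every real-valued nonnegative Schwartz function φ on ℝⁿ, the value ⟨R_μ, φ⟩ is a nonnegative real number (i.e. R_μ is a positive measure); (ii) μ is real and belongs to the generalized Wallach set W_k = {0, k, 2k, …, k(n−1)} ∪ (k(n−1), ∞). -/

import Mathlib

/-!
The proof goes through the exponential moments `L(α) = ⟨R_μ, x^α e^{-t(x₁+⋯+xₙ)}⟩` (`Lm`), where the
exponential is cut off outside the orthant to make it a Schwartz function. They satisfy, whenever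
`α_l ≤ α_i + 1` for all `l ≠ i`, the recursion (`Lm_rec`)

  `t L(α + e_i) = (μ - k(n-1) + α_i) L(α) + k ∑_{l≠i} ∑_{j < α_i+1-α_l} L(α^{i,l,j})`,

in which `α^{i,l,j}` has the entries `α_l + j` and `α_i - j` at `i` and `l`. For large real `μ` this is
integration by parts in `x_i`: the logarithmic derivative of `ω_k` produces `2k/(x_i - x_l)`, and
averaging over `x_i ↔ x_l` turns the quotient into a sum of monomials. Replacing `|x_i - x_l|` by
`((x_i - x_l)² + δ²)^{1/2}` keeps all terms integrable (`rec_delta`, `symmetrise`), and `δ → 0`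
gives `rec_real`. Both sides being entire in `μ`, the recursion holds for all `μ`. It follows that
`t^{|S|} L(1_S) = ∏_{c<|S|} (μ - kc) · L(0)` for sets `S` of coordinates (`Lm_ind`). Compared,
for `S` the full set, with the effect of multiplication by `D` on `R_μ` (`riesz_shift`), this shows
that `t^n` times `L(0)` at `μ + 1` is `L(0)` at `μ`, whence `L(0) > 0` for every real `μ`
(`Lm_zero_pos`).

*Sufficiency.* Every nonzero `α` arises by raising an entry which thereby becomes maximal, so the
recursion determines all moments by induction on `|α|`. If `μ = kr`, then `L(α) = 0` as soon as `α`
has more than `r` nonzero entries (`Lm_vanish`), and on the whole Wallach set `L(α) ≥ 0`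
(`Lm_nonneg`). A distribution that depends only on values in the orthant and has nonnegative
exponential moments is positive (`isPos_of_mono`): a nonnegative test function `φ` may be assumed
to have compact support (`tendsto_cutoff`), and is then written as `E ψ` with `E = e^{-∑x}`. The
Szász–Mirakyan operators `S_m ψ` converge to `ψ` with all derivatives, and `E · S_m ψ` is a
nonnegative combination of functions `∏ (x_i+1)^{j_i} e^{-(m+1)∑x}` (`tendsto_szS`). The nodes are
taken at `-1 + j/m`, since the cut-off exponential lives on `{x_i ≥ -1}` and the convergence must
be controlled there.

*Necessity.* Let `R_μ` be positive. For real `μ`, testing against `∏_{i∈S} (x_i + 1) e^{-t∑x}`,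
rescaling by `t^{|S|}` and letting `t → 0` gives `∏_{c<j} (μ - kc) ≥ 0` for all `j ≤ n` (`pos_prod`),
which forces `μ` into the Wallach set (`wallach_of_prod`). For nonreal `μ`, both `L(0)` and
`μ L(0)` are real, so `L(0) = 0` (`pos_exp_zero`). By domination `R_μ` vanishes on compactly
supported functions in the open orthant, hence so does `R_{μ+M}` for all natural `M`
(`Good.vanish_shift`), which is absurd when the defining integral converges (`exists_good_ne`).
-/

open MeasureTheory Finset

/-- The type-A Dunkl weight `ω_k(x) = ∏_{i<j} |x_i - x_j|^{2k}`. -/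
noncomputable def wk (n : ℕ) (k : ℝ) (x : Fin n → ℝ) : ℝ :=
  ∏ i : Fin n, ∏ j ∈ Finset.Ioi i, |x i - x j| ^ (2 * k)

/-- The open positive orthant `ℝ₊ⁿ = (0,∞)ⁿ`. -/
def Rplus (n : ℕ) : Set (Fin n → ℝ) := {x | ∀ i, 0 < x i}

/-- The constant `d_n(k) = ∏_{j=1}^n Γ(1+jk)/Γ(1+k)`. -/
noncomputable def dnk (n : ℕ) (k : ℝ) : ℝ :=
  ∏ j ∈ Finset.range n, Real.Gamma (1 + (j + 1) * k) / Real.Gamma (1 + k)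

/-- The multivariable Gamma function `Γ_n(μ;k) = ∏_{j=1}^n Γ(μ - k(j-1))`. -/
noncomputable def Gammank (n : ℕ) (k : ℝ) (μ : ℂ) : ℂ :=
  ∏ j ∈ Finset.range n, Complex.Gamma (μ - ((k * (j : ℝ) : ℝ) : ℂ))

/-- A family of type-A Riesz distributions for multiplicity `k > 0`: a map `R : ℂ → 𝓢'(ℝⁿ)`
such that `μ ↦ ⟨R_μ, φ⟩` is entire for every Schwartz `φ`, and for `Re μ > μ₀ = k(n-1)`,
`⟨R_μ, φ⟩ = (d_n(k)Γ_n(μ;k))⁻¹ ∫_{ℝ₊ⁿ} φ(x) D(x)^{μ-μ₀-1} ω_k(x) dx`. -/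
def IsRieszFamily (n : ℕ) (k : ℝ)
    (R : ℂ → (SchwartzMap (Fin n → ℝ) ℂ →L[ℂ] ℂ)) : Prop :=
  (∀ φ : SchwartzMap (Fin n → ℝ) ℂ, Differentiable ℂ (fun μ => R μ φ)) ∧
  ∀ μ : ℂ, k * ((n : ℝ) - 1) < μ.re → ∀ φ : SchwartzMap (Fin n → ℝ) ℂ,
    R μ φ = ((dnk n k : ℂ) * Gammank n k μ)⁻¹ *
      ∫ x in Rplus n,
        φ x * (∏ i, (x i : ℂ) ^ (μ - ((k * ((n : ℝ) - 1) : ℝ) : ℂ) - 1)) * (wk n k x : ℂ)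

section Riesz

variable {n : ℕ}

/-! ### Exponential test functions -/

/-- A smooth cutoff `ℝ → ℂ`, equal to `1` on `[0,∞)` and to `0` on `(-∞,-1]`, with values in
`[0,1]`. -/
noncomputable def cutoff (u : ℝ) : ℂ := ((Real.smoothTransition (u + 1) : ℝ) : ℂ)

lemma cutoff_temperate : Function.HasTemperateGrowth cutoff := by
  have h1 : Function.HasTemperateGrowth Real.smoothTransition := by
    have hs : ContDiff ℝ (⊤ : ℕ∞) Real.smoothTransition := Real.smoothTransition.contDiff
    refine Function.HasTemperateGrowth.of_fderiv (k := 0) (C := 1) ?_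
      (hs.differentiable (by simp)) ?_
    · refine HasCompactSupport.hasTemperateGrowth ?_ ?_
      · refine HasCompactSupport.intro (isCompact_Icc (a := (0:ℝ)) (b := 1)) ?_
        intro x hx
        rw [Set.mem_Icc, not_and_or, not_le, not_le] at hx
        rcases hx with hx | hx
        · have : Real.smoothTransition =ᶠ[nhds x] fun _ => (0:ℝ) := by
            filter_upwards [Iio_mem_nhds hx] with y hy
            exact Real.smoothTransition.zero_of_nonpos (le_of_lt hy)
          rw [this.fderiv_eq]; simp
        · have : Real.smoothTransition =ᶠ[nhds x] fun _ => (1:ℝ) := by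
            filter_upwards [Ioi_mem_nhds hx] with y hy
            exact Real.smoothTransition.one_of_one_le (le_of_lt hy)
          rw [this.fderiv_eq]; simp
      · exact hs.fderiv_right (by simp)
    · intro x
      rw [Real.norm_of_nonneg (Real.smoothTransition.nonneg x)]
      simpa using Real.smoothTransition.le_one x
  have h2 : Function.HasTemperateGrowth (fun u : ℝ => u + 1) := by fun_prop
  exact Function.HasTemperateGrowth.comp Complex.ofRealCLM.hasTemperateGrowth (h1.comp h2)

lemma cutoff_one {u : ℝ} (hu : 0 ≤ u) : cutoff u = 1 := by
  simp [cutoff, Real.smoothTransition.one_of_one_le (show 1 ≤ u + 1 by linarith)]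

lemma cutoff_zero {u : ℝ} (hu : u ≤ -1) : cutoff u = 0 := by
  simp [cutoff, Real.smoothTransition.zero_of_nonpos (show u + 1 ≤ 0 by linarith)]


/-- The product cutoff on `ℝⁿ`. -/
noncomputable def cutoffProd (n : ℕ) (x : Fin n → ℝ) : ℂ := ∏ i, cutoff (x i)

lemma coord_temperate (i : Fin n) : Function.HasTemperateGrowth (fun x : Fin n → ℝ => x i) :=
  (ContinuousLinearMap.proj (R := ℝ) (φ := fun _ : Fin n => ℝ) i).hasTemperateGrowth

lemma prod_temperate {ι : Type*} (s : Finset ι) (f : ι → (Fin n → ℝ) → ℂ)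
    (h : ∀ i ∈ s, Function.HasTemperateGrowth (f i)) :
    Function.HasTemperateGrowth (fun x => ∏ i ∈ s, f i x) := by
  classical
  induction s using Finset.induction_on with
  | empty => simp
  | insert a s ha ih =>
    simp only [Finset.prod_insert ha]
    exact (h a (by simp)).mul (ih fun i hi => h i (by simp [hi]))

lemma cutoffProd_temperate : Function.HasTemperateGrowth (cutoffProd n) :=
  prod_temperate _ _ fun i _ => cutoff_temperate.comp (coord_temperate i)

lemma cutoffProd_zero {x : Fin n → ℝ} {i : Fin n} (h : x i ≤ -1) : cutoffProd n x = 0 :=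
  Finset.prod_eq_zero (Finset.mem_univ i) (cutoff_zero h)

/-- The function `χ(x) e^{-t(x₁+⋯+xₙ)}` underlying the exponential test functions. -/
noncomputable def expFun (n : ℕ) (t : ℝ) (x : Fin n → ℝ) : ℂ :=
  cutoffProd n x * ((Real.exp (-t * ∑ i, x i) : ℝ) : ℂ)

/-- Every derivative of `e^{-t∑x}` is bounded by a multiple of `e^{-t∑x}`. -/
lemma iteratedFDeriv_exp_bound (n : ℕ) (t : ℝ) (N : ℕ) : ∃ C : ℝ, 0 ≤ C ∧ ∀ x : Fin n → ℝ,
    ‖iteratedFDeriv ℝ N (fun x : Fin n → ℝ => ((Real.exp (-t * ∑ i, x i) : ℝ) : ℂ)) x‖ ≤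
      C * Real.exp (-t * ∑ i, x i) := by
  set ℓ : (Fin n → ℝ) →L[ℝ] ℝ := (-t) • ∑ i, ContinuousLinearMap.proj (R := ℝ) i with hℓ
  have hℓx : ∀ x, ℓ x = -t * ∑ i, x i := by intro x; simp [hℓ]
  refine ⟨‖ℓ‖ ^ N, by positivity, fun x => ?_⟩
  have e : (fun x : Fin n → ℝ => ((Real.exp (-t * ∑ i, x i) : ℝ) : ℂ)) =
      (Complex.ofRealLI : ℝ →ₗᵢ[ℝ] ℂ) ∘ (Real.exp ∘ ℓ) := by
    ext x; simp [hℓx]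
  rw [e, LinearIsometry.norm_iteratedFDeriv_comp_left _
    ((Real.contDiff_exp.comp ℓ.contDiff).contDiffAt (n := (⊤ : ℕ∞))) (by exact_mod_cast le_top),
    ContinuousLinearMap.iteratedFDeriv_comp_right ℓ (Real.contDiff_exp (n := (⊤ : ℕ∞))) x (by exact_mod_cast le_top)]
  refine (ContinuousMultilinearMap.norm_compContinuousLinearMap_le _ _).trans ?_
  rw [norm_iteratedFDeriv_eq_norm_iteratedDeriv]
  simp [iteratedDeriv_eq_iterate, hℓx, abs_of_pos, Real.exp_pos, mul_comm]

/-- On `{x_i ≥ -1}` powers of `1 + ‖x‖` are absorbed by the exponential. -/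
lemma pow_mul_exp_bound (n : ℕ) {t : ℝ} (ht : 0 < t) (K : ℕ) : ∃ C : ℝ, 0 ≤ C ∧ ∀ x : Fin n → ℝ,
    (∀ i, -1 ≤ x i) → (1 + ‖x‖) ^ K * Real.exp (-t * ∑ i, x i) ≤ C := by
  refine ⟨(K.factorial : ℝ) / t ^ K * Real.exp (t * (n + 2)), by positivity, fun x hx => ?_⟩
  set u : ℝ := ∑ i, (x i + 1) with hu
  have hu0 : 0 ≤ u := Finset.sum_nonneg fun i _ => by linarith [hx i]
  have hxu : ‖x‖ ≤ u + 1 := by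
    refine (pi_norm_le_iff_of_nonneg (by linarith)).2 fun i => ?_
    have : x i + 1 ≤ u := Finset.single_le_sum (f := fun i => x i + 1)
      (fun i _ => by linarith [hx i]) (Finset.mem_univ i)
    rw [Real.norm_eq_abs, abs_le]; constructor <;> linarith [hx i]
  have hsum : ∑ i, x i = u - n := by simp [hu, Finset.sum_add_distrib]
  have h1 : (t * (u + 2)) ^ K / K.factorial ≤ Real.exp (t * (u + 2)) :=
    Real.pow_div_factorial_le_exp _ (by positivity) K
  have h2 : (1 + ‖x‖) ^ K ≤ (u + 2) ^ K := by
    apply pow_le_pow_left₀ (by positivity); linarith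
  have h3 : (u + 2) ^ K ≤ (K.factorial : ℝ) / t ^ K * Real.exp (t * (u + 2)) := by
    rw [mul_pow, div_le_iff₀ (by positivity)] at h1
    rw [div_mul_eq_mul_div, le_div_iff₀ (by positivity)]; linarith
  calc (1 + ‖x‖) ^ K * Real.exp (-t * ∑ i, x i)
      ≤ ((K.factorial : ℝ) / t ^ K * Real.exp (t * (u + 2))) * Real.exp (-t * ∑ i, x i) := by
        gcongr; exact h2.trans h3
    _ = _ := by
        rw [mul_assoc, ← Real.exp_add, hsum]; ring_nf

lemma iteratedFDeriv_zero_of_lt {F : Type*} [NormedAddCommGroup F] [NormedSpace ℝ F]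
    {f : (Fin n → ℝ) → F} (hf : ∀ x, (∃ i, x i ≤ -1) → f x = 0) (N : ℕ) {x : Fin n → ℝ} {i : Fin n}
    (hx : x i < -1) : iteratedFDeriv ℝ N f x = 0 := by
  have : f =ᶠ[nhds x] fun _ => (0 : F) := by
    have ho : IsOpen {y : Fin n → ℝ | y i < -1} := isOpen_lt (continuous_apply i) continuous_const
    filter_upwards [ho.mem_nhds hx] with y hy
    exact hf y ⟨i, le_of_lt hy⟩
  rw [(this.iteratedFDeriv ℝ N).eq_of_nhds]
  simp

lemma expC_contDiff (n : ℕ) (t : ℝ) : ContDiff ℝ (⊤ : ℕ∞)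
    (fun x : Fin n → ℝ => ((Real.exp (-t * ∑ i, x i) : ℝ) : ℂ)) :=
  Complex.ofRealCLM.contDiff.comp (Real.contDiff_exp.comp (by fun_prop))

lemma expFun_contDiff (t : ℝ) : ContDiff ℝ (⊤ : ℕ∞) (expFun n t) :=
  cutoffProd_temperate.1.mul (expC_contDiff n t)

lemma expFun_zero (t : ℝ) (x : Fin n → ℝ) (h : ∃ i, x i ≤ -1) : expFun n t x = 0 := by
  obtain ⟨i, hi⟩ := h
  simp [expFun, cutoffProd_zero hi]

lemma expFun_decay (n : ℕ) {t : ℝ} (ht : 0 < t) (K N : ℕ) : ∃ C : ℝ, ∀ x : Fin n → ℝ,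
    ‖x‖ ^ K * ‖iteratedFDeriv ℝ N (expFun n t) x‖ ≤ C := by
  obtain ⟨P, A, hA0, hA⟩ := cutoffProd_temperate (n := n) |>.norm_iteratedFDeriv_le_uniform N
  choose B hB0 hB using iteratedFDeriv_exp_bound n t
  obtain ⟨C, hC0, hC⟩ := pow_mul_exp_bound n ht (K + P)
  refine ⟨(∑ i ∈ Finset.range (N + 1), (N.choose i : ℝ) * A * B (N - i)) * C, fun x => ?_⟩
  by_cases hx : ∃ i, x i < -1
  · obtain ⟨i, hi⟩ := hx
    rw [iteratedFDeriv_zero_of_lt (expFun_zero t) N hi]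
    simp only [norm_zero, mul_zero]
    exact mul_nonneg (Finset.sum_nonneg fun i _ => by have := hB0 (N - i); positivity) hC0
  · push Not at hx
    have h1 := norm_iteratedFDeriv_mul_le (𝕜 := ℝ) (N := ((⊤ : ℕ∞) : WithTop ℕ∞)) (f := cutoffProd n)
      (g := fun x : Fin n → ℝ => ((Real.exp (-t * ∑ i, x i) : ℝ) : ℂ))
      cutoffProd_temperate.1 (expC_contDiff n t) x
      (n := N) (by exact_mod_cast le_top)
    have h2 : ‖iteratedFDeriv ℝ N (expFun n t) x‖ ≤
        ∑ i ∈ Finset.range (N + 1), (N.choose i : ℝ) * A * B (N - i) *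
          ((1 + ‖x‖) ^ P * Real.exp (-t * ∑ i, x i)) := by
      refine h1.trans (Finset.sum_le_sum fun i hi => ?_)
      have ha := hA i (by simpa [Nat.lt_succ_iff] using hi) x
      have hb := hB (N - i) x
      have := hB0 (N - i)
      calc _ ≤ (N.choose i : ℝ) * (A * (1 + ‖x‖) ^ P) * (B (N - i) * Real.exp (-t * ∑ i, x i)) := by
            gcongr
        _ = _ := by ring
    rw [← Finset.sum_mul] at h2
    have h3 : ‖x‖ ^ K ≤ (1 + ‖x‖) ^ K := by gcongr; linarith
    have hS : 0 ≤ ∑ i ∈ Finset.range (N + 1), (N.choose i : ℝ) * A * B (N - i) :=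
      Finset.sum_nonneg fun i _ => by have := hB0 (N - i); positivity
    calc _ ≤ (1 + ‖x‖) ^ K * ((∑ i ∈ Finset.range (N + 1), (N.choose i : ℝ) * A * B (N - i)) *
          ((1 + ‖x‖) ^ P * Real.exp (-t * ∑ i, x i))) := by gcongr
      _ = (∑ i ∈ Finset.range (N + 1), (N.choose i : ℝ) * A * B (N - i)) *
          ((1 + ‖x‖) ^ (K + P) * Real.exp (-t * ∑ i, x i)) := by ring
      _ ≤ _ := by gcongr; exact hC x hx

/-- The Schwartz function which equals `e^{-t(x₁+⋯+xₙ)}` on the closed orthant, is nonnegative, and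
vanishes unless all `x_i > -1`. For `t ≤ 0` it is the zero function. -/
noncomputable def expS (n : ℕ) (t : ℝ) : SchwartzMap (Fin n → ℝ) ℂ :=
  if ht : 0 < t then ⟨expFun n t, expFun_contDiff t, fun K N => expFun_decay n ht K N⟩ else 0

lemma expS_apply {t : ℝ} (ht : 0 < t) (x : Fin n → ℝ) : expS n t x = expFun n t x := by
  rw [expS, dif_pos ht]; rfl

/-- The real function whose complexification is `expFun`. -/
noncomputable def expR (n : ℕ) (t : ℝ) (x : Fin n → ℝ) : ℝ :=
  (∏ i, Real.smoothTransition (x i + 1)) * Real.exp (-t * ∑ i, x i)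

lemma expFun_eq (t : ℝ) (x : Fin n → ℝ) : expFun n t x = (expR n t x : ℂ) := by
  simp [expFun, expR, cutoffProd, cutoff]

lemma expR_nonneg (t : ℝ) (x : Fin n → ℝ) : 0 ≤ expR n t x :=
  mul_nonneg (Finset.prod_nonneg fun _ _ => Real.smoothTransition.nonneg _) (Real.exp_pos _).le

lemma expR_zero (t : ℝ) {x : Fin n → ℝ} {i : Fin n} (h : x i ≤ -1) : expR n t x = 0 := by
  rw [expR, Finset.prod_eq_zero (Finset.mem_univ i), zero_mul]
  exact Real.smoothTransition.zero_of_nonpos (by linarith)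

lemma expR_eq (t : ℝ) {x : Fin n → ℝ} (h : ∀ i, 0 ≤ x i) :
    expR n t x = Real.exp (-t * ∑ i, x i) := by
  rw [expR, Finset.prod_eq_one, one_mul]
  exact fun i _ => Real.smoothTransition.one_of_one_le (by linarith [h i])

/-! ### Polynomial multiples -/

/-- Multiplication of a Schwartz function by a function of temperate growth. -/
noncomputable abbrev smulT (g : (Fin n → ℝ) → ℂ) (φ : SchwartzMap (Fin n → ℝ) ℂ) :
    SchwartzMap (Fin n → ℝ) ℂ := SchwartzMap.smulLeftCLM ℂ g φ

lemma smulT_apply {g : (Fin n → ℝ) → ℂ} (hg : Function.HasTemperateGrowth g)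
    (φ : SchwartzMap (Fin n → ℝ) ℂ) (x : Fin n → ℝ) : smulT g φ x = g x * φ x := by
  simp [smulT, SchwartzMap.smulLeftCLM_apply_apply hg]

/-- The monomial `x^α = ∏ x_i^{α_i}` as a complex-valued function. -/
noncomputable def mono (α : Fin n → ℕ) (x : Fin n → ℝ) : ℂ := ∏ i, (x i : ℂ) ^ α i

lemma coordC_temperate (i : Fin n) :
    Function.HasTemperateGrowth (fun x : Fin n → ℝ => (x i : ℂ)) :=
  Function.HasTemperateGrowth.comp Complex.ofRealCLM.hasTemperateGrowth (coord_temperate i)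

lemma mono_temperate (α : Fin n → ℕ) : Function.HasTemperateGrowth (mono α) :=
  prod_temperate _ _ fun i _ => (coordC_temperate i).pow _

/-! ### Regularised weights and the moment recursion for large real parameters -/


/-- The truncated power `u₊^p`. -/
noncomputable def pp (p u : ℝ) : ℝ := (max u 0) ^ p

lemma pp_of_pos {p u : ℝ} (hu : 0 < u) : pp p u = u ^ p := by rw [pp, max_eq_left hu.le]

lemma pp_of_nonpos {p u : ℝ} (hp : 0 < p) (hu : u ≤ 0) : pp p u = 0 := by
  rw [pp, max_eq_right hu, Real.zero_rpow hp.ne']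

lemma pp_continuous {p : ℝ} (hp : 0 < p) : Continuous (pp p) :=
  (continuous_id.max continuous_const).rpow_const fun _ => Or.inr hp.le

lemma pp_hasDerivAt {p : ℝ} (hp : 1 < p) (u : ℝ) : HasDerivAt (pp p) (p * pp (p - 1) u) u := by
  have hp0 : 0 < p := by linarith
  rcases lt_trichotomy u 0 with hu | rfl | hu
  · rw [pp_of_nonpos (by linarith) hu.le, mul_zero]
    refine (hasDerivAt_const u (0:ℝ)).congr_of_eventuallyEq ?_
    filter_upwards [Iio_mem_nhds hu] with y hy
    exact pp_of_nonpos hp0 (le_of_lt hy)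
  · rw [pp_of_nonpos (by linarith) le_rfl, mul_zero, ← hasDerivWithinAt_univ,
      ← Set.Ici_union_Iic (a := (0:ℝ))]
    refine HasDerivWithinAt.union ?_ ?_
    · have h := (Real.hasDerivAt_rpow_const (x := 0) (p := p) (Or.inr hp.le)).hasDerivWithinAt
        (s := Set.Ici 0)
      rw [Real.zero_rpow (by linarith), mul_zero] at h
      refine h.congr (fun x hx => ?_) ?_
      · rw [pp, max_eq_left hx]
      · rw [pp, max_self]
    · refine (hasDerivWithinAt_const _ _ (0:ℝ)).congr (fun x hx => ?_) ?_
      · exact pp_of_nonpos hp0 hx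
      · exact pp_of_nonpos hp0 le_rfl
  · rw [pp_of_pos hu]
    refine (Real.hasDerivAt_rpow_const (Or.inl hu.ne')).congr_of_eventuallyEq ?_
    filter_upwards [Ioi_mem_nhds hu] with y hy
    exact pp_of_pos hy

/-- The weight `∏_{p≠q} ((x_p - x_q)² + δ²)^{k/2}`, a smooth regularisation of `ω_k`. -/
noncomputable def omd (k δ : ℝ) (x : Fin n → ℝ) : ℝ :=
  ∏ p, ∏ q ∈ ({p}ᶜ : Finset (Fin n)), ((x q - x p) ^ 2 + δ ^ 2) ^ (k / 2)

lemma wk_eq_omd (k : ℝ) (x : Fin n → ℝ) : wk n k x = omd k 0 x := by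
  unfold wk omd
  rw [← Finset.prod_prod_Ioi_mul_eq_prod_prod_off_diag
    (f := fun q p => ((x q - x p) ^ 2 + 0 ^ 2) ^ (k / 2))]
  refine Finset.prod_congr rfl fun i _ => Finset.prod_congr rfl fun j _ => ?_
  have h : ∀ a : ℝ, (a ^ 2 + 0 ^ 2) ^ (k / 2) = |a| ^ k := by
    intro a
    rw [← sq_abs, zero_pow two_ne_zero, add_zero, ← Real.rpow_natCast, ← Real.rpow_mul (abs_nonneg a)]
    congr 1; push_cast; ring
  rw [h, h, abs_sub_comm (x j), ← Real.mul_rpow (abs_nonneg _) (abs_nonneg _),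
    Real.rpow_mul (abs_nonneg _)]
  congr 1
  rw [Real.rpow_two, sq]

/-- `e^{-t Σ x_i}` times the regularised weight. -/
noncomputable def Gd (k δ t : ℝ) (x : Fin n → ℝ) : ℝ := Real.exp (-t * ∑ i, x i) * omd k δ x

/-- The truncated power function `∏_j (x_j)₊^{α_j + s - 1}`. -/
noncomputable def Aw (s : ℝ) (α : Fin n → ℕ) (x : Fin n → ℝ) : ℝ := ∏ j, pp (α j + s - 1) (x j)

lemma omd_nonneg (k δ : ℝ) (x : Fin n → ℝ) : 0 ≤ omd k δ x :=
  Finset.prod_nonneg fun _ _ => Finset.prod_nonneg fun _ _ => Real.rpow_nonneg (by positivity) _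

lemma Gd_nonneg (k δ t : ℝ) (x : Fin n → ℝ) : 0 ≤ Gd k δ t x :=
  mul_nonneg (Real.exp_pos _).le (omd_nonneg _ _ _)

lemma Aw_nonneg (s : ℝ) (α : Fin n → ℕ) (x : Fin n → ℝ) : 0 ≤ Aw s α x :=
  Finset.prod_nonneg fun _ _ => Real.rpow_nonneg (le_max_right _ _) _

lemma Aw_zero {s : ℝ} (hs : 1 < s) (α : Fin n → ℕ) {x : Fin n → ℝ} (hx : x ∉ Rplus n) :
    Aw s α x = 0 := by
  simp only [Rplus, Set.mem_ofPred_eq, not_forall, not_lt] at hx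
  obtain ⟨i, hi⟩ := hx
  refine Finset.prod_eq_zero (Finset.mem_univ i) (pp_of_nonpos ?_ hi)
  have : (0:ℝ) ≤ α i := by positivity
  linarith

lemma Aw_pos (s : ℝ) (α : Fin n → ℕ) {x : Fin n → ℝ} (hx : x ∈ Rplus n) :
    Aw s α x = (∏ j, x j ^ α j) * ∏ j, x j ^ (s - 1) := by
  rw [Aw, ← Finset.prod_mul_distrib]
  refine Finset.prod_congr rfl fun j _ => ?_
  rw [pp_of_pos (hx j), ← Real.rpow_natCast, ← Real.rpow_add (hx j)]
  congr 1; ring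

lemma Aw_continuous {s : ℝ} (hs : 1 < s) (α : Fin n → ℕ) : Continuous (Aw s α) := by
  refine continuous_finsetProd _ fun j _ => (pp_continuous ?_).comp (continuous_apply j)
  have : (0:ℝ) ≤ α j := by positivity
  linarith

lemma omd_continuous {k : ℝ} (hk : 0 < k) (δ : ℝ) : Continuous (omd (n := n) k δ) := by
  refine continuous_finsetProd _ fun p _ => continuous_finsetProd _ fun q _ => ?_
  exact Continuous.rpow_const (by fun_prop) fun _ => Or.inr (by positivity)

lemma Gd_continuous {k : ℝ} (hk : 0 < k) (δ t : ℝ) : Continuous (Gd (n := n) k δ t) :=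
  (Real.continuous_exp.comp (by fun_prop)).mul (omd_continuous hk δ)

lemma omd_continuous_delta {k : ℝ} (hk : 0 < k) (x : Fin n → ℝ) : Continuous fun δ => omd k δ x := by
  refine continuous_finsetProd _ fun p _ => continuous_finsetProd _ fun q _ => ?_
  exact Continuous.rpow_const (by fun_prop) fun _ => Or.inr (by positivity)

lemma Gd_continuous_delta {k : ℝ} (hk : 0 < k) (t : ℝ) (x : Fin n → ℝ) :
    Continuous fun δ => Gd k δ t x := continuous_const.mul (omd_continuous_delta hk x)

/-- All integrands below are dominated, uniformly in the regularisation parameter, by the modulus of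
a Schwartz function. -/
lemma dominated {k : ℝ} (hk : 0 < k) {t : ℝ} (ht : 0 < t) {s : ℝ} (hs : 1 < s) (α : Fin n → ℕ) :
    ∃ H : (Fin n → ℝ) → ℝ, Integrable H ∧ ∀ δ, 0 ≤ δ → δ ≤ 1 → ∀ x,
      Aw s α x * Gd k δ t x ≤ H x := by
  obtain ⟨M1, hM1⟩ := exists_nat_ge ((∑ j, (α j : ℝ)) + s - 1)
  obtain ⟨M2, hM2⟩ := exists_nat_ge (2 * k)
  set Q : (Fin n → ℝ) → ℂ := fun x => ∏ j, (1 + (x j : ℂ)) with hQ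
  set M : ℕ := M1 * n + M2 * (n - 1) * n with hM
  have hT : Function.HasTemperateGrowth (fun x => Q x ^ M) := by
    refine Function.HasTemperateGrowth.pow (prod_temperate _ _ fun j _ => ?_) _
    exact (Function.HasTemperateGrowth.const _).add (coordC_temperate j)
  refine ⟨fun x => ‖smulT (fun x => Q x ^ M) (expS n t) x‖, (SchwartzMap.integrable _).norm, ?_⟩
  intro δ hδ0 hδ1 x
  by_cases hx : x ∈ Rplus n
  swap
  · rw [Aw_zero hs α hx, zero_mul]; positivity
  simp only
  rw [smulT_apply hT, norm_mul, norm_pow, expS_apply ht, expFun_eq, Complex.norm_real,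
    expR_eq _ fun i => (hx i).le, Real.norm_of_nonneg (Real.exp_pos _).le]
  have hQn : ‖Q x‖ = ∏ j, (1 + x j) := by
    rw [hQ, norm_prod]
    refine Finset.prod_congr rfl fun j _ => ?_
    rw [← Complex.ofReal_one, ← Complex.ofReal_add, Complex.norm_real, Real.norm_of_nonneg]
    linarith [hx j]
  rw [hQn]
  set P : ℝ := ∏ j, (1 + x j) with hP
  have hle : ∀ j, 1 + x j ≤ P := fun j => by
    rw [hP, ← Finset.mul_prod_erase _ _ (Finset.mem_univ j)]
    refine le_mul_of_one_le_right (by linarith [hx j]) ?_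
    exact Finset.one_le_prod fun i _ => by linarith [hx i]
  have hP1 : 1 ≤ P := Finset.one_le_prod fun i _ => by linarith [hx i]
  have h1 : Aw s α x ≤ P ^ (M1 * n) := by
    have : Aw s α x ≤ ∏ j : Fin n, P ^ M1 := by
      refine Finset.prod_le_prod (fun _ _ => Real.rpow_nonneg (le_max_right _ _) _) fun j _ => ?_
      rw [pp_of_pos (hx j), ← Real.rpow_natCast]
      have hj : (α j : ℝ) ≤ ∑ j, (α j : ℝ) :=
        Finset.single_le_sum (f := fun j => (α j : ℝ)) (fun _ _ => by positivity) (Finset.mem_univ j)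
      have hj0 : (0:ℝ) ≤ α j := by positivity
      calc x j ^ (α j + s - 1) ≤ P ^ (α j + s - 1) :=
            Real.rpow_le_rpow (hx j).le (by linarith [hle j]) (by linarith)
        _ ≤ P ^ (M1 : ℝ) := Real.rpow_le_rpow_of_exponent_le hP1 (by linarith)
    simpa [← pow_mul] using this
  have h2 : omd k δ x ≤ P ^ (M2 * (n - 1) * n) := by
    have : omd k δ x ≤ ∏ p : Fin n, ∏ q ∈ ({p}ᶜ : Finset (Fin n)), P ^ M2 := by
      refine Finset.prod_le_prod
        (fun _ _ => Finset.prod_nonneg fun _ _ => Real.rpow_nonneg (by positivity) _)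
        fun p _ => Finset.prod_le_prod (fun _ _ => Real.rpow_nonneg (by positivity) _) fun q _ => ?_
      have ha := hx p
      have hb := hx q
      have h3 : (x q - x p) ^ 2 + δ ^ 2 ≤ P ^ 4 := by
        have : (x q - x p) ^ 2 + δ ^ 2 ≤ (1 + x q) ^ 2 * (1 + x p) ^ 2 := by
          have := mul_pos ha hb
          have h5 : δ ^ 2 ≤ 1 := by nlinarith
          nlinarith [mul_pos this this, mul_pos this ha, mul_pos this hb]
        calc _ ≤ (1 + x q) ^ 2 * (1 + x p) ^ 2 := this
          _ ≤ P ^ 2 * P ^ 2 := by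
            have := hle q; have := hle p; gcongr
          _ = _ := by ring
      calc ((x q - x p) ^ 2 + δ ^ 2) ^ (k / 2) ≤ (P ^ 4) ^ (k / 2) :=
            Real.rpow_le_rpow (by positivity) h3 (by positivity)
        _ = P ^ (2 * k) := by
            rw [← Real.rpow_natCast, ← Real.rpow_mul (by linarith)]; congr 1; push_cast; ring
        _ ≤ P ^ (M2 : ℝ) := Real.rpow_le_rpow_of_exponent_le hP1 hM2
        _ = _ := Real.rpow_natCast _ _
    simpa [← pow_mul, Finset.card_compl] using this
  calc Aw s α x * Gd k δ t x
      ≤ P ^ (M1 * n) * (Real.exp (-t * ∑ i, x i) * P ^ (M2 * (n - 1) * n)) := by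
        unfold Gd
        have := Aw_nonneg s α x
        have := omd_nonneg k δ x
        gcongr
    _ = _ := by rw [hM]; ring

lemma integrable_AwGd {k : ℝ} (hk : 0 < k) {t : ℝ} (ht : 0 < t) {s : ℝ} (hs : 1 < s)
    (α : Fin n → ℕ) {δ : ℝ} (hδ0 : 0 ≤ δ) (hδ1 : δ ≤ 1) :
    Integrable fun x => Aw s α x * Gd k δ t x := by
  obtain ⟨H, hH, hb⟩ := dominated hk ht hs α
  refine hH.mono' ((Aw_continuous hs α).mul (Gd_continuous hk δ t)).aestronglyMeasurable ?_
  filter_upwards with x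
  rw [Real.norm_of_nonneg (mul_nonneg (Aw_nonneg _ _ _) (Gd_nonneg _ _ _ _))]
  exact hb δ hδ0 hδ1 x

lemma Gd_eq_exp {k δ : ℝ} (hδ : 0 < δ) (t : ℝ) (x : Fin n → ℝ) :
    Gd k δ t x = Real.exp (-t * ∑ i, x i + ∑ p, ∑ q ∈ ({p}ᶜ : Finset (Fin n)),
      Real.log ((x q - x p) ^ 2 + δ ^ 2) * (k / 2)) := by
  rw [Gd, Real.exp_add, Real.exp_sum]
  congr 1
  refine Finset.prod_congr rfl fun p _ => ?_
  rw [Real.exp_sum]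
  refine Finset.prod_congr rfl fun q _ => ?_
  rw [Real.rpow_def_of_pos (by positivity)]

/-- Partial derivative of the weight in the direction `e_i`. -/
lemma Gd_hasLineDerivAt {k δ : ℝ} (hδ : 0 < δ) (t : ℝ) (i : Fin n) (x : Fin n → ℝ) :
    HasLineDerivAt ℝ (Gd k δ t) (Gd k δ t x * (-t + ∑ l ∈ ({i}ᶜ : Finset (Fin n)),
      2 * k * ((x i - x l) / ((x i - x l) ^ 2 + δ ^ 2)))) x (Pi.single i 1) := by
  set e : Fin n → ℝ := Pi.single i 1 with he
  have hlin : ∀ q, HasDerivAt (fun u : ℝ => (x + u • e) q) (e q) 0 := fun q => by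
    simpa using ((hasDerivAt_id (0:ℝ)).mul_const (e q)).const_add (x q)
  have hexp : HasDerivAt (fun u : ℝ => -t * ∑ i, (x + u • e) i + ∑ p, ∑ q ∈ ({p}ᶜ : Finset (Fin n)),
      Real.log (((x + u • e) q - (x + u • e) p) ^ 2 + δ ^ 2) * (k / 2))
      (-t * ∑ i, e i + ∑ p, ∑ q ∈ ({p}ᶜ : Finset (Fin n)),
        (2 * (x q - x p) * (e q - e p)) / ((x q - x p) ^ 2 + δ ^ 2) * (k / 2)) 0 := by
    refine ((HasDerivAt.fun_sum fun q _ => hlin q).const_mul _).add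
      (HasDerivAt.fun_sum fun p _ => HasDerivAt.fun_sum fun q _ => HasDerivAt.mul_const ?_ _)
    have h1 := (((hlin q).sub (hlin p)).pow 2).add_const (δ ^ 2)
    have h2 := h1.log (by simp; positivity)
    refine h2.congr_deriv ?_
    simp
  have hsum : (-t * ∑ i, e i + ∑ p, ∑ q ∈ ({p}ᶜ : Finset (Fin n)),
        (2 * (x q - x p) * (e q - e p)) / ((x q - x p) ^ 2 + δ ^ 2) * (k / 2)) =
      -t + ∑ l ∈ ({i}ᶜ : Finset (Fin n)),
      2 * k * ((x i - x l) / ((x i - x l) ^ 2 + δ ^ 2)) := by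
    have h1 : ∑ i, e i = 1 := by simp [he]
    rw [h1, mul_one]
    congr 1
    have h2 : ∀ p q, (2 * (x q - x p) * (e q - e p)) / ((x q - x p) ^ 2 + δ ^ 2) * (k / 2) =
        (if q = i then k * ((x q - x p) / ((x q - x p) ^ 2 + δ ^ 2)) else 0) -
        (if p = i then k * ((x q - x p) / ((x q - x p) ^ 2 + δ ^ 2)) else 0) := by
      intro p q
      simp only [he, Pi.single_apply]
      split_ifs <;> ring
    simp only [h2, Finset.sum_sub_distrib]
    have h3 : ∑ p, ∑ q ∈ ({p}ᶜ : Finset (Fin n)),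
        (if q = i then k * ((x q - x p) / ((x q - x p) ^ 2 + δ ^ 2)) else 0) =
        ∑ l ∈ ({i}ᶜ : Finset (Fin n)), k * ((x i - x l) / ((x i - x l) ^ 2 + δ ^ 2)) := by
      rw [← Finset.sum_subset (Finset.subset_univ ({i}ᶜ : Finset (Fin n)))]
      · refine Finset.sum_congr rfl fun p hp => ?_
        rw [Finset.sum_ite_eq', if_pos]
        simpa [eq_comm] using hp
      · intro p _ hp
        rw [Finset.sum_ite_eq', if_neg]
        simpa [eq_comm] using hp
    have h4 : ∑ p, ∑ q ∈ ({p}ᶜ : Finset (Fin n)),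
        (if p = i then k * ((x q - x p) / ((x q - x p) ^ 2 + δ ^ 2)) else 0) =
        - ∑ l ∈ ({i}ᶜ : Finset (Fin n)), k * ((x i - x l) / ((x i - x l) ^ 2 + δ ^ 2)) := by
      rw [Finset.sum_eq_single i (by intro p _ hp; simp [hp]) (by simp), ← Finset.sum_neg_distrib]
      refine Finset.sum_congr rfl fun q _ => ?_
      rw [if_pos rfl, ← neg_sub (x i) (x q)]; ring
    rw [h3, h4, sub_neg_eq_add, ← Finset.sum_add_distrib]
    refine Finset.sum_congr rfl fun q _ => by ring
  have h := hexp.exp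
  rw [hsum] at h
  unfold HasLineDerivAt
  simp only [Gd_eq_exp hδ]
  simpa using h

/-- Partial derivative of the truncated powers in the direction `e_i`. -/
lemma Aw_hasLineDerivAt {s : ℝ} (hs : 3 < s) (α : Fin n → ℕ) (i : Fin n) (x : Fin n → ℝ) :
    HasLineDerivAt ℝ (Aw s (α + Pi.single i 1)) ((s + α i) * Aw s α x) x (Pi.single i 1) := by
  unfold HasLineDerivAt
  have hα : (0:ℝ) ≤ α i := by positivity
  have h1 : ∀ u : ℝ, Aw s (α + Pi.single i 1) (x + u • Pi.single i 1) =
      pp (s + α i) (x i + u) * ∏ j ∈ Finset.univ.erase i, pp (α j + s - 1) (x j) := by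
    intro u
    rw [Aw, ← Finset.mul_prod_erase _ _ (Finset.mem_univ i)]
    congr 1
    · simp; ring_nf
    · refine Finset.prod_congr rfl fun j hj => ?_
      have := Finset.ne_of_mem_erase hj
      simp [this]
  simp only [h1]
  have h2 : Aw s α x = pp (s + α i - 1) (x i) * ∏ j ∈ Finset.univ.erase i, pp (α j + s - 1) (x j) := by
    rw [Aw, ← Finset.mul_prod_erase _ _ (Finset.mem_univ i), add_comm s]
  rw [h2, ← mul_assoc]
  refine HasDerivAt.mul_const ?_ _
  have h3 : HasDerivAt (pp (s + α i)) ((s + α i) * pp (s + α i - 1) (x i)) (x i + 0) := by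
    simpa using pp_hasDerivAt (p := s + α i) (by linarith) (x i)
  exact h3.comp_const_add (x i) 0

/-! ### Integration by parts and symmetrisation -/

/-- The moments of the regularised weight. -/
noncomputable def Imom (n : ℕ) (k t s δ : ℝ) (α : Fin n → ℕ) : ℝ :=
  ∫ x : Fin n → ℝ, Aw s α x * Gd k δ t x

lemma abs_quot_le {δ : ℝ} (hδ : 0 < δ) (u : ℝ) : |u / (u ^ 2 + δ ^ 2)| ≤ 1 / δ := by
  rw [abs_div, abs_of_pos (show 0 < u ^ 2 + δ ^ 2 by positivity), div_le_div_iff₀ (by positivity) hδ,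
    ← sq_abs u]
  nlinarith [sq_nonneg (|u| - δ), abs_nonneg u]

lemma integrable_quot {k : ℝ} (hk : 0 < k) {t : ℝ} (ht : 0 < t) {s : ℝ} (hs : 1 < s)
    (α : Fin n → ℕ) {δ : ℝ} (hδ0 : 0 < δ) (hδ1 : δ ≤ 1) (i l : Fin n) :
    Integrable fun x : Fin n → ℝ =>
      ((x i - x l) / ((x i - x l) ^ 2 + δ ^ 2)) * (Aw s α x * Gd k δ t x) := by
  refine (integrable_AwGd hk ht hs α hδ0.le hδ1).bdd_mul (c := 1 / δ) ?_ ?_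
  · refine Continuous.aestronglyMeasurable (Continuous.div (by fun_prop) (by fun_prop) ?_)
    intro x; positivity
  · filter_upwards with x
    exact abs_quot_le hδ0 _

/-- Integration by parts in the variable `x_i`. -/
lemma rec_delta {k : ℝ} (hk : 0 < k) {t : ℝ} (ht : 0 < t) {s : ℝ} (hs : 3 < s)
    (α : Fin n → ℕ) {δ : ℝ} (hδ0 : 0 < δ) (hδ1 : δ ≤ 1) (i : Fin n) :
    t * Imom n k t s δ (α + Pi.single i 1) = (s + α i) * Imom n k t s δ α +
      ∑ l ∈ ({i}ᶜ : Finset (Fin n)), 2 * k * ∫ x : Fin n → ℝ,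
        ((x i - x l) / ((x i - x l) ^ 2 + δ ^ 2)) * (Aw s (α + Pi.single i 1) x * Gd k δ t x) := by
  set β := α + Pi.single i 1 with hβ
  have hs1 : 1 < s := by linarith
  have iβ := integrable_AwGd hk ht hs1 β hδ0.le hδ1
  have iα := integrable_AwGd hk ht hs1 α hδ0.le hδ1
  have iq := fun l => integrable_quot hk ht hs1 β hδ0 hδ1 i l
  set f : (Fin n → ℝ) → ℝ := fun x => Aw s β x * Gd k δ t x
  set f' : (Fin n → ℝ) → ℝ := fun x => (s + α i) * (Aw s α x * Gd k δ t x) + (-t * f x +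
    ∑ l ∈ ({i}ᶜ : Finset (Fin n)), 2 * k * (((x i - x l) / ((x i - x l) ^ 2 + δ ^ 2)) * f x)) with hf'
  have isum : Integrable fun x : Fin n → ℝ => ∑ l ∈ ({i}ᶜ : Finset (Fin n)),
      2 * k * (((x i - x l) / ((x i - x l) ^ 2 + δ ^ 2)) * f x) :=
    integrable_finsetSum _ fun l _ => (iq l).const_mul _
  have ibs : Integrable fun x => -t * f x + ∑ l ∈ ({i}ᶜ : Finset (Fin n)),
      2 * k * (((x i - x l) / ((x i - x l) ^ 2 + δ ^ 2)) * f x) := (iβ.const_mul _).add isum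
  have if' : Integrable f' := (iα.const_mul _).add ibs
  have hd : ∀ x, HasLineDerivAt ℝ f (f' x) x (Pi.single i 1) := by
    intro x
    have h := (show HasDerivAt _ _ _ from Aw_hasLineDerivAt hs α i x).mul
      (show HasDerivAt _ _ _ from Gd_hasLineDerivAt (k := k) hδ0 t i x)
    refine HasDerivAt.congr_deriv h ?_
    simp only [zero_smul, add_zero, hf', f, mul_add, Finset.mul_sum, ← hβ]
    congr 1
    · ring
    · congr 1
      · ring
      · refine Finset.sum_congr rfl fun l _ => by ring
  have key := integral_bilinear_hasLineDerivAt_right_eq_neg_left_of_integrable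
    (μ := (volume : Measure (Fin n → ℝ))) (f := f) (f' := f') (g := fun _ => (1:ℝ))
    (g' := fun _ => (0:ℝ)) (v := Pi.single i 1) (B := ContinuousLinearMap.mul ℝ ℝ)
    (by simpa using if') (by simp) (by simpa using iβ) (fun x _ => hd x)
    (fun x _ => by unfold HasLineDerivAt; simpa using hasDerivAt_const _ _)
  simp only [ContinuousLinearMap.mul_apply', mul_zero, integral_zero, mul_one] at key
  have h0 : ∫ x, f' x = 0 := by linarith
  rw [hf', integral_add (iα.const_mul _) ibs,
    integral_add (iβ.const_mul _) isum, integral_finsetSum _ fun l _ => (iq l).const_mul _] at h0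
  simp only [integral_const_mul] at h0
  simp only [Imom]
  linarith

lemma piCongrLeft_swap (i l : Fin n) (x : Fin n → ℝ) :
    (MeasurableEquiv.piCongrLeft (fun _ : Fin n => ℝ) (Equiv.swap i l)) x =
      x ∘ Equiv.swap i l := by
  ext j
  obtain ⟨m, rfl⟩ := (Equiv.swap i l).surjective j
  rw [MeasurableEquiv.coe_piCongrLeft, Equiv.piCongrLeft_apply_apply]
  simp

lemma integral_swap (i l : Fin n) (f : (Fin n → ℝ) → ℝ) :
    ∫ x : Fin n → ℝ, f (x ∘ Equiv.swap i l) = ∫ x, f x := by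
  have h := volume_measurePreserving_piCongrLeft (fun _ : Fin n => ℝ) (Equiv.swap i l)
  have e := h.integral_comp' f
  simp only [piCongrLeft_swap] at e
  exact e

lemma omd_swap (k δ : ℝ) (σ : Equiv.Perm (Fin n)) (x : Fin n → ℝ) :
    omd k δ (x ∘ σ) = omd k δ x := by
  unfold omd
  refine Fintype.prod_equiv σ _ _ fun p => ?_
  refine Finset.prod_bij (fun q _ => σ q) ?_ ?_ ?_ ?_
  · intro q hq; simpa using hq
  · intro a _ b _ h; exact σ.injective h
  · intro q hq
    refine ⟨σ.symm q, ?_, by simp⟩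
    simp only [mem_compl, mem_singleton] at hq ⊢
    rintro rfl; simp at hq
  · intro q _; rfl

lemma Gd_swap (k δ t : ℝ) (σ : Equiv.Perm (Fin n)) (x : Fin n → ℝ) :
    Gd k δ t (x ∘ σ) = Gd k δ t x := by
  unfold Gd
  rw [omd_swap]
  congr 3
  exact Equiv.sum_comp σ x

/-- The exponent vectors arising from symmetrisation in `x_i` and `x_l`. -/
def gam (α : Fin n → ℕ) (i l : Fin n) (j : ℕ) : Fin n → ℕ :=
  Function.update (Function.update α i (α l + j)) l (α i - j)

lemma prod_split (i l : Fin n) (hl : l ≠ i) (f : Fin n → ℝ) :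
    ∏ j, f j = f i * f l * ∏ j ∈ (Finset.univ.erase i).erase l, f j := by
  rw [← Finset.mul_prod_erase _ _ (Finset.mem_univ i),
    ← Finset.mul_prod_erase (Finset.univ.erase i) f (show l ∈ Finset.univ.erase i by simp [hl]), mul_assoc]

/-- The divided difference of `x_i x^α` under `x_i ↔ x_l` is a sum of monomials. -/
lemma Aw_antisymm {s : ℝ} (hs : 1 < s) (α : Fin n → ℕ) (i l : Fin n) (hl : l ≠ i)
    (hle : α l ≤ α i + 1) (x : Fin n → ℝ) :
    Aw s (α + Pi.single i 1) x - Aw s (α + Pi.single i 1) (x ∘ Equiv.swap i l) =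
      (x i - x l) * ∑ j ∈ Finset.range (α i + 1 - α l), Aw s (gam α i l j) x := by
  by_cases hx : x ∈ Rplus n
  · have hx' : x ∘ Equiv.swap i l ∈ Rplus n := fun j => hx _
    have hp : ∏ j, (x ∘ Equiv.swap i l) j ^ (s - 1) = ∏ j, x j ^ (s - 1) :=
      Equiv.prod_comp (Equiv.swap i l) fun j => x j ^ (s - 1)
    simp only [Aw_pos s _ hx, Aw_pos s _ hx', hp, ← sub_mul, ← Finset.sum_mul, ← mul_assoc]
    congr 1
    set r : ℝ := ∏ j ∈ (Finset.univ.erase i).erase l, x j ^ α j with hr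
    have h1 : ∏ j, x j ^ (α + Pi.single i 1 : Fin n → ℕ) j = x i ^ (α i + 1) * x l ^ α l * r := by
      rw [prod_split i l hl]
      congr 1
      · simp [hl]
      · refine Finset.prod_congr rfl fun j hj => ?_
        have : j ≠ i := by aesop
        simp [this]
    have h2 : ∏ j, (x ∘ Equiv.swap i l) j ^ (α + Pi.single i 1 : Fin n → ℕ) j = x l ^ (α i + 1) * x i ^ α l * r := by
      rw [prod_split i l hl]
      congr 1
      · simp [hl]
      · refine Finset.prod_congr rfl fun j hj => ?_
        have hji : j ≠ i := by aesop
        have hjl : j ≠ l := by aesop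
        simp [hji, Equiv.swap_apply_of_ne_of_ne hji hjl]
    have h3 : ∀ j, ∏ m, x m ^ gam α i l j m = x i ^ (α l + j) * x l ^ (α i - j) * r := by
      intro j
      rw [prod_split i l hl]
      congr 1
      · simp [gam, hl.symm]
      · refine Finset.prod_congr rfl fun m hm => ?_
        have hji : m ≠ i := by aesop
        have hjl : m ≠ l := by aesop
        simp [gam, hji, hjl]
    rw [h1, h2]
    simp only [h3, ← Finset.sum_mul]
    obtain ⟨d, hd⟩ : ∃ d, α i + 1 = α l + d := ⟨α i + 1 - α l, by omega⟩
    have hd' : α i + 1 - α l = d := by omega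
    rw [hd']
    have h4 : ∑ j ∈ Finset.range d, x i ^ (α l + j) * x l ^ (α i - j) =
        x i ^ α l * x l ^ α l * ∑ j ∈ Finset.range d, x i ^ j * x l ^ (d - 1 - j) := by
      rw [Finset.mul_sum]
      refine Finset.sum_congr rfl fun j hj => ?_
      have : α i - j = α l + (d - 1 - j) := by have := Finset.mem_range.1 hj; omega
      rw [this, pow_add, pow_add]; ring
    rw [h4, hd]
    have h5 := Commute.mul_geom_sum₂ (Commute.all (x i) (x l)) d
    rw [← sub_mul, ← mul_assoc, mul_left_comm, h5]
    ring
  · have hx' : x ∘ Equiv.swap i l ∉ Rplus n := by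
      intro h; apply hx; intro j
      simpa using h (Equiv.swap i l j)
    rw [Aw_zero hs _ hx, Aw_zero hs _ hx', Finset.sum_eq_zero fun j _ => Aw_zero hs _ hx]
    simp

/-- Averaging over the swap `x_i ↔ x_l` turns the singular quotient
`(x_i - x_l) / ((x_i - x_l)² + δ²)` into a factor with values in `[0, 1]`, times monomials. -/
lemma symmetrise {k : ℝ} (hk : 0 < k) {t : ℝ} (ht : 0 < t) {s : ℝ} (hs : 1 < s)
    (α : Fin n → ℕ) {δ : ℝ} (hδ0 : 0 < δ) (hδ1 : δ ≤ 1) (i l : Fin n) (hl : l ≠ i)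
    (hle : α l ≤ α i + 1) :
    2 * ∫ x : Fin n → ℝ,
        ((x i - x l) / ((x i - x l) ^ 2 + δ ^ 2)) * (Aw s (α + Pi.single i 1) x * Gd k δ t x) =
      ∑ j ∈ Finset.range (α i + 1 - α l), ∫ x : Fin n → ℝ,
        ((x i - x l) ^ 2 / ((x i - x l) ^ 2 + δ ^ 2)) * (Aw s (gam α i l j) x * Gd k δ t x) := by
  set β := α + Pi.single i 1
  have iq := integrable_quot hk ht hs β hδ0 hδ1 i l
  have h1 := integral_swap i l (fun x : Fin n → ℝ =>
    ((x i - x l) / ((x i - x l) ^ 2 + δ ^ 2)) * (Aw s β x * Gd k δ t x))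
  have iq' : Integrable fun x : Fin n → ℝ => (fun x : Fin n → ℝ =>
    ((x i - x l) / ((x i - x l) ^ 2 + δ ^ 2)) * (Aw s β x * Gd k δ t x)) (x ∘ Equiv.swap i l) := by
    have h := volume_measurePreserving_piCongrLeft (fun _ : Fin n => ℝ) (Equiv.swap i l)
    refine ((h.integrable_comp_emb (MeasurableEquiv.measurableEmbedding _)).2 iq).congr ?_
    filter_upwards with x
    simp only [Function.comp_apply]
    rw [piCongrLeft_swap]; rfl
  rw [two_mul]
  nth_rewrite 2 [← h1]
  rw [← integral_add iq iq', ← integral_finsetSum]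
  · congr 1
    ext x
    simp only [Function.comp_apply, Equiv.swap_apply_left, Equiv.swap_apply_right, Gd_swap]
    have h2 := Aw_antisymm hs α i l hl hle x
    rw [← Finset.mul_sum, ← Finset.sum_mul]
    have h3 : (x l - x i) / ((x l - x i) ^ 2 + δ ^ 2) = - ((x i - x l) / ((x i - x l) ^ 2 + δ ^ 2)) := by
      rw [← neg_sub (x i) (x l)]; ring
    rw [h3]
    change _ / _ * (Aw s β x * _) + -(_ / _) * (Aw s β (x ∘ Equiv.swap i l) * _) = _
    calc _ = ((x i - x l) / ((x i - x l) ^ 2 + δ ^ 2)) *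
          (Aw s β x - Aw s β (x ∘ Equiv.swap i l)) * Gd k δ t x := by ring
      _ = _ := by rw [h2]; ring
  · intro j _
    refine (integrable_AwGd hk ht hs _ hδ0.le hδ1).bdd_mul (c := 1) ?_ ?_
    · refine Continuous.aestronglyMeasurable (Continuous.div (by fun_prop) (by fun_prop) ?_)
      intro x; positivity
    · filter_upwards with x
      rw [Real.norm_of_nonneg (by positivity), div_le_one (by positivity)]
      nlinarith [sq_nonneg δ]

/-- The regularisation parameters `1/(m+1)`. -/
noncomputable def dl (m : ℕ) : ℝ := 1 / ((m : ℝ) + 1)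

lemma dl_pos (m : ℕ) : 0 < dl m := by unfold dl; positivity
lemma dl_le (m : ℕ) : dl m ≤ 1 := by
  unfold dl; rw [div_le_one (by positivity)]; linarith [(Nat.cast_nonneg m : (0:ℝ) ≤ m)]
lemma dl_tendsto : Filter.Tendsto dl Filter.atTop (nhds 0) := tendsto_one_div_add_atTop_nhds_zero_nat

lemma Imom_tendsto {k : ℝ} (hk : 0 < k) {t : ℝ} (ht : 0 < t) {s : ℝ} (hs : 1 < s) (α : Fin n → ℕ) :
    Filter.Tendsto (fun m => Imom n k t s (dl m) α) Filter.atTop (nhds (Imom n k t s 0 α)) := by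
  obtain ⟨H, hH, hb⟩ := dominated hk ht hs α
  refine tendsto_integral_of_dominated_convergence H (fun m => ?_) hH (fun m => ?_) ?_
  · exact ((Aw_continuous hs α).mul (Gd_continuous hk _ t)).aestronglyMeasurable
  · filter_upwards with x
    rw [Real.norm_of_nonneg (mul_nonneg (Aw_nonneg _ _ _) (Gd_nonneg _ _ _ _))]
    exact hb _ (dl_pos m).le (dl_le m) x
  · filter_upwards with x
    exact (((Gd_continuous_delta hk t x).tendsto 0).comp dl_tendsto).const_mul _

lemma omd_zero_of_eq {k : ℝ} (hk : 0 < k) {x : Fin n → ℝ} {i l : Fin n} (hl : l ≠ i)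
    (h : x i = x l) : omd k 0 x = 0 := by
  refine Finset.prod_eq_zero (Finset.mem_univ i) (Finset.prod_eq_zero (i := l) (by simpa using hl) ?_)
  rw [h]; simp [hk.ne']

lemma Iq_tendsto {k : ℝ} (hk : 0 < k) {t : ℝ} (ht : 0 < t) {s : ℝ} (hs : 1 < s) (α : Fin n → ℕ)
    (i l : Fin n) (hl : l ≠ i) :
    Filter.Tendsto (fun m => ∫ x : Fin n → ℝ,
        ((x i - x l) ^ 2 / ((x i - x l) ^ 2 + dl m ^ 2)) * (Aw s α x * Gd k (dl m) t x))
      Filter.atTop (nhds (Imom n k t s 0 α)) := by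
  obtain ⟨H, hH, hb⟩ := dominated hk ht hs α
  have hq : ∀ (m : ℕ) (u : ℝ), 0 ≤ u ^ 2 / (u ^ 2 + dl m ^ 2) ∧ u ^ 2 / (u ^ 2 + dl m ^ 2) ≤ 1 := by
    intro m u
    have := dl_pos m
    refine ⟨by positivity, ?_⟩
    rw [div_le_one (by positivity)]
    nlinarith [sq_nonneg (dl m)]
  refine tendsto_integral_of_dominated_convergence H (fun m => ?_) hH (fun m => ?_) ?_
  · refine (Continuous.mul (Continuous.div (by fun_prop) (by fun_prop) ?_)
      ((Aw_continuous hs α).mul (Gd_continuous hk _ t))).aestronglyMeasurable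
    intro x
    have := dl_pos m
    positivity
  · filter_upwards with x
    have h0 := mul_nonneg (Aw_nonneg s α x) (Gd_nonneg k (dl m) t x)
    rw [Real.norm_of_nonneg (mul_nonneg (hq m _).1 h0)]
    exact (mul_le_of_le_one_left h0 (hq m _).2).trans (hb _ (dl_pos m).le (dl_le m) x)
  · filter_upwards with x
    have hG := (((Gd_continuous_delta hk t x).tendsto 0).comp dl_tendsto).const_mul (Aw s α x)
    by_cases h : x i = x l
    · have h0 : Aw s α x * Gd k 0 t x = 0 := by rw [Gd, omd_zero_of_eq hk hl h]; ring
      simp only [h, sub_self, h0]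
      simp
    · have hne : x i - x l ≠ 0 := sub_ne_zero.2 h
      have h1 : Filter.Tendsto (fun m => (x i - x l) ^ 2 / ((x i - x l) ^ 2 + dl m ^ 2))
          Filter.atTop (nhds ((x i - x l) ^ 2 / ((x i - x l) ^ 2 + 0 ^ 2))) :=
        tendsto_const_nhds.div (tendsto_const_nhds.add (dl_tendsto.pow 2)) (by simpa using hne)
      have h2 := h1.mul hG
      rw [zero_pow two_ne_zero, add_zero, div_self (by simpa using hne), one_mul] at h2
      exact h2

/-- The moment recursion for large real parameters. -/
lemma rec_real {k : ℝ} (hk : 0 < k) {t : ℝ} (ht : 0 < t) {s : ℝ} (hs : 3 < s)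
    (α : Fin n → ℕ) (i : Fin n) (hα : ∀ l, l ≠ i → α l ≤ α i + 1) :
    t * Imom n k t s 0 (α + Pi.single i 1) = (s + α i) * Imom n k t s 0 α +
      k * ∑ l ∈ ({i}ᶜ : Finset (Fin n)), ∑ j ∈ Finset.range (α i + 1 - α l),
        Imom n k t s 0 (gam α i l j) := by
  have hs1 : 1 < s := by linarith
  have h1 : ∀ m, t * Imom n k t s (dl m) (α + Pi.single i 1) = (s + α i) * Imom n k t s (dl m) α +
      k * ∑ l ∈ ({i}ᶜ : Finset (Fin n)), ∑ j ∈ Finset.range (α i + 1 - α l), ∫ x : Fin n → ℝ,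
        ((x i - x l) ^ 2 / ((x i - x l) ^ 2 + dl m ^ 2)) * (Aw s (gam α i l j) x * Gd k (dl m) t x) := by
    intro m
    rw [rec_delta hk ht hs α (dl_pos m) (dl_le m) i, Finset.mul_sum]
    congr 1
    refine Finset.sum_congr rfl fun l hl => ?_
    have hl' : l ≠ i := by simpa using hl
    rw [← symmetrise hk ht hs1 α (dl_pos m) (dl_le m) i l hl' (hα l hl')]
    ring
  have h2 := ((Imom_tendsto hk ht hs1 (α + Pi.single i 1)).const_mul t).congr h1
  have h3 := ((Imom_tendsto hk ht hs1 α).const_mul (s + α i)).add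
    (Filter.Tendsto.const_mul k (tendsto_finsetSum ({i}ᶜ : Finset (Fin n)) fun l hl =>
      tendsto_finsetSum (Finset.range (α i + 1 - α l)) fun j _ =>
        Iq_tendsto hk ht hs1 (gam α i l j) i l (by simpa using hl)))
  exact tendsto_nhds_unique h2 h3

/-! ### Analytic continuation -/


/-- Entire functions that agree at all large real arguments are equal. -/
lemma entire_ext {f g : ℂ → ℂ} (hf : Differentiable ℂ f) (hg : Differentiable ℂ g) (A : ℝ)
    (h : ∀ m : ℝ, A < m → f m = g m) : f = g := by
  refine AnalyticOnNhd.eq_of_frequently_eq (z₀ := ((A + 1 : ℝ) : ℂ))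
    (fun z _ => hf.analyticAt z) (fun z _ => hg.analyticAt z) ?_
  have ht : Filter.Tendsto (fun m : ℕ => (((A + 1) + 1 / ((m : ℝ) + 1) : ℝ) : ℂ)) Filter.atTop
      (nhdsWithin ((A + 1 : ℝ) : ℂ) {((A + 1 : ℝ) : ℂ)}ᶜ) := by
    refine tendsto_nhdsWithin_iff.2 ⟨?_, ?_⟩
    · refine (Complex.continuous_ofReal.tendsto _).comp ?_
      simpa using tendsto_one_div_add_atTop_nhds_zero_nat.const_add (A + 1)
    · filter_upwards with m
      have : (0:ℝ) < 1 / ((m : ℝ) + 1) := by positivity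
      simp only [Set.mem_compl_iff, Set.mem_singleton_iff, Complex.ofReal_inj]
      linarith
  refine ht.frequently (Filter.Eventually.frequently ?_)
  filter_upwards with m
  apply h
  have : (0:ℝ) < 1 / ((m : ℝ) + 1) := by positivity
  linarith

lemma dnk_pos {k : ℝ} (hk : 0 < k) : 0 < dnk n k :=
  Finset.prod_pos fun j _ => div_pos (Real.Gamma_pos_of_pos (by positivity))
    (Real.Gamma_pos_of_pos (by positivity))

lemma sub_kj_pos {k : ℝ} (hk : 0 < k) {m : ℝ} (hm : k * ((n : ℝ) - 1) < m) {j : ℕ}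
    (hj : j ∈ Finset.range n) : 0 < m - k * j := by
  have : (j : ℝ) + 1 ≤ n := by exact_mod_cast Finset.mem_range.1 hj
  nlinarith

lemma Gammank_ofReal {k : ℝ} (hk : 0 < k) {m : ℝ} (hm : k * ((n : ℝ) - 1) < m) :
    ∃ g : ℝ, 0 < g ∧ Gammank n k m = (g : ℂ) := by
  refine ⟨∏ j ∈ Finset.range n, Real.Gamma (m - k * j), Finset.prod_pos fun j hj =>
    Real.Gamma_pos_of_pos (sub_kj_pos hk hm hj), ?_⟩
  rw [Gammank, Complex.ofReal_prod]
  refine Finset.prod_congr rfl fun j _ => ?_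
  rw [← Complex.ofReal_sub, Complex.Gamma_ofReal]

lemma Gammank_ne_zero {k : ℝ} (hk : 0 < k) {μ : ℂ} (hm : k * ((n : ℝ) - 1) < μ.re) :
    Gammank n k μ ≠ 0 := by
  refine Finset.prod_ne_zero_iff.2 fun j hj => Complex.Gamma_ne_zero_of_re_pos ?_
  simpa using sub_kj_pos hk hm hj

lemma measurableSet_Rplus : MeasurableSet (Rplus n) :=
  (MeasurableSet.pi Set.countable_univ (s := Set.univ) (t := fun _ : Fin n => Set.Ioi (0:ℝ))
    fun _ _ => measurableSet_Ioi).congr (by ext x; simp [Rplus])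

/-- `R_μ` only sees the restriction of a test function to the orthant. -/
lemma riesz_local {k : ℝ} {R : ℂ → (SchwartzMap (Fin n → ℝ) ℂ →L[ℂ] ℂ)}
    (hR : IsRieszFamily n k R) {φ ψ : SchwartzMap (Fin n → ℝ) ℂ}
    (h : ∀ x ∈ Rplus n, φ x = ψ x) (μ : ℂ) : R μ φ = R μ ψ := by
  refine congrFun (entire_ext (hR.1 φ) (hR.1 ψ) (k * ((n : ℝ) - 1)) fun m hm => ?_) μ
  rw [hR.2 m (by simpa using hm), hR.2 m (by simpa using hm)]
  congr 1
  exact setIntegral_congr_fun measurableSet_Rplus fun x hx => by simp only [h x hx]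

/-- Multiplication by `D` raises the parameter by one. -/
lemma riesz_shift {k : ℝ} (hk : 0 < k) {R : ℂ → (SchwartzMap (Fin n → ℝ) ℂ →L[ℂ] ℂ)}
    (hR : IsRieszFamily n k R) (φ : SchwartzMap (Fin n → ℝ) ℂ) (μ : ℂ) :
    R μ (smulT (mono fun _ => 1) φ) = (∏ j ∈ Finset.range n, (μ - k * j)) * R (μ + 1) φ := by
  refine congrFun (entire_ext (f := fun μ => R μ (smulT (mono fun _ => 1) φ))
    (g := fun μ => (∏ j ∈ Finset.range n, (μ - k * j)) * R (μ + 1) φ) (hR.1 _) ?_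
    (k * ((n : ℝ) - 1)) fun m hm => ?_) μ
  · refine Differentiable.mul (by fun_prop) ((hR.1 φ).comp (differentiable_id.add_const 1))
  · rw [hR.2 m (by simpa using hm), hR.2 (m + 1) (by simp; linarith)]
    have hG : Gammank n k (m + 1) = (∏ j ∈ Finset.range n, ((m : ℂ) - k * j)) * Gammank n k m := by
      rw [Gammank, Gammank, ← Finset.prod_mul_distrib]
      refine Finset.prod_congr rfl fun j hj => ?_
      have := (sub_kj_pos hk hm hj).ne'
      rw [show (m : ℂ) + 1 - ((k * (j : ℝ) : ℝ) : ℂ) = ((m : ℂ) - k * j) + 1 by push_cast; ring,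
        Complex.Gamma_add_one _ (by exact_mod_cast this)]
      push_cast; rfl
    have hP : ∏ j ∈ Finset.range n, ((m : ℂ) - k * j) ≠ 0 :=
      Finset.prod_ne_zero_iff.2 fun j hj => by exact_mod_cast (sub_kj_pos hk hm hj).ne'
    have hI : ∫ x in Rplus n, smulT (mono fun _ => 1) φ x *
        (∏ i, (x i : ℂ) ^ ((m : ℂ) - ((k * ((n : ℝ) - 1) : ℝ) : ℂ) - 1)) * (wk n k x : ℂ) =
        ∫ x in Rplus n, φ x *
        (∏ i, (x i : ℂ) ^ ((m : ℂ) + 1 - ((k * ((n : ℝ) - 1) : ℝ) : ℂ) - 1)) * (wk n k x : ℂ) := by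
      refine setIntegral_congr_fun measurableSet_Rplus fun x hx => ?_
      rw [smulT_apply (mono_temperate _)]
      congr 1
      rw [mul_comm (mono _ x), mul_assoc]
      congr 1
      rw [mono, ← Finset.prod_mul_distrib]
      refine Finset.prod_congr rfl fun i _ => ?_
      have hx0 : (x i : ℂ) ≠ 0 := by exact_mod_cast (hx i).ne'
      conv_lhs => rw [pow_one, mul_comm]
      conv_lhs => enter [2]; rw [← Complex.cpow_one (x i : ℂ)]
      rw [← Complex.cpow_add _ _ hx0]
      congr 1; ring
    rw [hI, hG, mul_inv, mul_inv, mul_inv]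
    field_simp

/-- The exponential moments of `R_μ`. -/
noncomputable def Lm (R : ℂ → (SchwartzMap (Fin n → ℝ) ℂ →L[ℂ] ℂ)) (t : ℝ) (μ : ℂ)
    (α : Fin n → ℕ) : ℂ := R μ (smulT (mono α) (expS n t))

lemma Lm_real {k : ℝ} (hk : 0 < k) {R : ℂ → (SchwartzMap (Fin n → ℝ) ℂ →L[ℂ] ℂ)}
    (hR : IsRieszFamily n k R) {t : ℝ} (ht : 0 < t) {m : ℝ} (hm : k * ((n : ℝ) - 1) + 1 < m) :
    ∃ c : ℝ, 0 < c ∧ ∀ α, Lm R t m α =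
      ((c * Imom n k t (m - k * ((n : ℝ) - 1)) 0 α : ℝ) : ℂ) := by
  obtain ⟨g, hg, hgΓ⟩ := Gammank_ofReal (n := n) hk (m := m) (by linarith)
  refine ⟨(dnk n k * g)⁻¹, inv_pos.2 (mul_pos (dnk_pos hk) hg), fun α => ?_⟩
  rw [Lm, hR.2 m (by simp; linarith), hgΓ]
  push_cast
  congr 1
  have hset : Imom n k t (m - k * ((n : ℝ) - 1)) 0 α =
      ∫ x in Rplus n, Aw (m - k * ((n : ℝ) - 1)) α x * Gd k 0 t x :=
    (setIntegral_eq_integral_of_forall_compl_eq_zero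
      fun x hx => by rw [Aw_zero (by linarith) α hx, zero_mul]).symm
  rw [hset, ← integral_complex_ofReal]
  refine setIntegral_congr_fun measurableSet_Rplus fun x hx => ?_
  rw [smulT_apply (mono_temperate _), expS_apply ht, expFun_eq, expR_eq _ fun i => (hx i).le,
    Aw_pos _ α hx, Gd, ← wk_eq_omd, mono]
  push_cast
  have : ∏ i, (x i : ℂ) ^ ((m : ℂ) - k * ((n:ℂ) - 1) - 1) =
      ∏ i, (((x i) ^ (m - k * ((n : ℝ) - 1) - 1) : ℝ) : ℂ) := by
    refine Finset.prod_congr rfl fun i _ => ?_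
    rw [Complex.ofReal_cpow (hx i).le]; push_cast; rfl
  rw [this]; ring

lemma Lm_differentiable {k : ℝ} {R : ℂ → (SchwartzMap (Fin n → ℝ) ℂ →L[ℂ] ℂ)}
    (hR : IsRieszFamily n k R) (t : ℝ) (α : Fin n → ℕ) : Differentiable ℂ fun μ => Lm R t μ α :=
  hR.1 _

/-- The moment recursion for all complex parameters. -/
lemma Lm_rec {k : ℝ} (hk : 0 < k) {R : ℂ → (SchwartzMap (Fin n → ℝ) ℂ →L[ℂ] ℂ)}
    (hR : IsRieszFamily n k R) {t : ℝ} (ht : 0 < t) (μ : ℂ) (α : Fin n → ℕ) (i : Fin n)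
    (hα : ∀ l, l ≠ i → α l ≤ α i + 1) :
    t * Lm R t μ (α + Pi.single i 1) = (μ - k * ((n : ℂ) - 1) + α i) * Lm R t μ α +
      k * ∑ l ∈ ({i}ᶜ : Finset (Fin n)), ∑ j ∈ Finset.range (α i + 1 - α l),
        Lm R t μ (gam α i l j) := by
  have hd := Lm_differentiable hR t
  refine congrFun (entire_ext (f := fun μ => t * Lm R t μ (α + Pi.single i 1))
    (g := fun μ => (μ - k * ((n : ℂ) - 1) + α i) * Lm R t μ α +
      k * ∑ l ∈ ({i}ᶜ : Finset (Fin n)), ∑ j ∈ Finset.range (α i + 1 - α l),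
        Lm R t μ (gam α i l j)) ((hd (α + Pi.single i 1)).const_mul (t : ℂ)) ?_ (k * ((n : ℝ) - 1) + 3) fun m hm => ?_) μ
  · have h1 : Differentiable ℂ fun μ : ℂ => μ - k * ((n : ℂ) - 1) + α i :=
      (differentiable_id.sub_const _).add_const _
    have h2 : Differentiable ℂ fun μ : ℂ => ∑ l ∈ ({i}ᶜ : Finset (Fin n)),
        ∑ j ∈ Finset.range (α i + 1 - α l), Lm R t μ (gam α i l j) :=
      Differentiable.fun_sum fun l _ => Differentiable.fun_sum fun j _ => hd (gam α i l j)
    exact (h1.mul (hd α)).add (h2.const_mul _)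
  · obtain ⟨c, hc, hL⟩ := Lm_real hk hR ht (m := m) (by linarith)
    have h := rec_real (n := n) hk ht (s := m - k * ((n : ℝ) - 1)) (by linarith) α i hα
    simp only [hL]
    have h' := congrArg (fun z : ℝ => ((c * z : ℝ) : ℂ)) h
    push_cast at h' ⊢
    simp only [Finset.mul_sum] at h' ⊢
    rw [mul_left_comm, h', mul_add, Finset.mul_sum]
    congr 1
    · ring
    · refine Finset.sum_congr rfl fun l _ => ?_
      rw [Finset.mul_sum]
      refine Finset.sum_congr rfl fun j _ => by ring

/-- The indicator vector of a set of coordinates. -/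
def ind (S : Finset (Fin n)) : Fin n → ℕ := fun j => if j ∈ S then 1 else 0

/-- For an indicator exponent the recursion is diagonal: each coordinate outside `insert i S`
contributes `k`, leaving the factor `μ - k(n-1) + k(n-1-|S|) = μ - k|S|`. -/
lemma Lm_ind_insert {k : ℝ} (hk : 0 < k) {R : ℂ → (SchwartzMap (Fin n → ℝ) ℂ →L[ℂ] ℂ)}
    (hR : IsRieszFamily n k R) {t : ℝ} (ht : 0 < t) (μ : ℂ) (S : Finset (Fin n)) (i : Fin n)
    (hi : i ∉ S) :
    t * Lm R t μ (ind (insert i S)) = (μ - k * S.card) * Lm R t μ (ind S) := by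
  have h1 : ind (insert i S) = ind S + Pi.single i 1 := by
    ext j
    by_cases hj : j = i
    · subst hj; simp [ind, hi]
    · simp [ind, hj]
  have hi0 : ind S i = 0 := by simp [ind, hi]
  rw [h1, Lm_rec hk hR ht μ (ind S) i fun l _ => by rw [hi0]; unfold ind; split_ifs <;> omega, hi0]
  have h2 : ∀ l ∈ ({i}ᶜ : Finset (Fin n)), ∑ j ∈ Finset.range (0 + 1 - ind S l),
      Lm R t μ (gam (ind S) i l j) = if l ∈ S then 0 else Lm R t μ (ind S) := by
    intro l hl
    have hl' : l ≠ i := by simpa using hl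
    by_cases hlS : l ∈ S
    · simp [ind, hlS]
    · have : ind S l = 0 := by simp [ind, hlS]
      rw [this, if_neg hlS]
      simp only [zero_add, tsub_zero, Finset.range_one, Finset.sum_singleton]
      congr 1
      ext m
      unfold gam
      by_cases hm : m = l
      · subst hm; simp [this, hi0]
      · by_cases hm' : m = i
        · subst hm'; simp [hm, hi0, this]
        · simp [hm, hm']
  rw [Finset.sum_congr rfl h2, Finset.sum_ite, Finset.sum_const_zero, zero_add, Finset.sum_const]
  have h3 : (({i}ᶜ : Finset (Fin n)).filter fun l => l ∉ S) = (insert i S)ᶜ := by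
    ext l; simp
  have h4 : (insert i S).card + ((insert i S)ᶜ).card = n := by
    simpa using Finset.card_add_card_compl (insert i S)
  rw [Finset.card_insert_of_notMem hi] at h4
  have h5 : (n : ℂ) = S.card + 1 + ((insert i S)ᶜ).card := by exact_mod_cast h4.symm
  rw [h3, h5, nsmul_eq_mul]
  push_cast; ring

/-- Moments of squarefree monomials, in terms of the total exponential mass `L(0)`. -/
lemma Lm_ind {k : ℝ} (hk : 0 < k) {R : ℂ → (SchwartzMap (Fin n → ℝ) ℂ →L[ℂ] ℂ)}
    (hR : IsRieszFamily n k R) {t : ℝ} (ht : 0 < t) (μ : ℂ) (S : Finset (Fin n)) :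
    t ^ S.card * Lm R t μ (ind S) = (∏ c ∈ Finset.range S.card, (μ - k * c)) * Lm R t μ 0 := by
  induction S using Finset.induction_on with
  | empty => simp only [Finset.card_empty, pow_zero, Finset.range_zero, Finset.prod_empty]; rfl
  | insert i S hi ih =>
    rw [Finset.card_insert_of_notMem hi, pow_succ, mul_assoc, Lm_ind_insert hk hR ht μ S i hi,
      mul_left_comm, ih, Finset.prod_range_succ]
    ring

lemma mono_zero : mono (n := n) 0 = fun _ => 1 := by ext x; simp [mono]

lemma smulT_one (φ : SchwartzMap (Fin n → ℝ) ℂ) : smulT (fun _ => 1) φ = φ := by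
  ext x; rw [smulT_apply (by fun_prop), one_mul]

lemma Lm_zero (R : ℂ → (SchwartzMap (Fin n → ℝ) ℂ →L[ℂ] ℂ)) (t : ℝ) (μ : ℂ) :
    Lm R t μ 0 = R μ (expS n t) := by rw [Lm, mono_zero, smulT_one]

lemma Lm_zero_shift {k : ℝ} (hk : 0 < k) {R : ℂ → (SchwartzMap (Fin n → ℝ) ℂ →L[ℂ] ℂ)}
    (hR : IsRieszFamily n k R) {t : ℝ} (ht : 0 < t) (μ : ℂ) :
    Lm R t μ 0 = t ^ n * Lm R t (μ + 1) 0 := by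
  refine congrFun (entire_ext (f := fun μ => Lm R t μ 0) (g := fun μ => t ^ n * Lm R t (μ + 1) 0)
    (Lm_differentiable hR t 0) (((Lm_differentiable hR t 0).comp
      (differentiable_id.add_const 1)).const_mul _) (k * ((n : ℝ) - 1)) fun m hm => ?_) μ
  have h1 := Lm_ind hk hR ht m (Finset.univ)
  have h2 := riesz_shift hk hR (expS n t) m
  have h3 : ind (Finset.univ : Finset (Fin n)) = fun _ => 1 := by ext; simp [ind]
  have hP : ∏ j ∈ Finset.range n, ((m : ℂ) - k * j) ≠ 0 :=
    Finset.prod_ne_zero_iff.2 fun j hj => by exact_mod_cast (sub_kj_pos hk hm hj).ne'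
  simp only [Finset.card_univ, Fintype.card_fin, h3] at h1
  rw [Lm, h2, ← Lm_zero] at h1
  refine mul_left_cancel₀ hP ?_
  rw [← h1]; ring

/-- `∫ e^{-tΣx_i} dR_μ` is positive for every real `μ`. -/
lemma Lm_zero_pos {k : ℝ} (hk : 0 < k) {R : ℂ → (SchwartzMap (Fin n → ℝ) ℂ →L[ℂ] ℂ)}
    (hR : IsRieszFamily n k R) {t : ℝ} (ht : 0 < t) (m : ℝ) :
    ∃ F : ℝ, 0 < F ∧ Lm R t m 0 = (F : ℂ) := by
  have key : ∀ N : ℕ, ∀ m : ℝ, k * ((n : ℝ) - 1) + 1 < m + N →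
      ∃ F : ℝ, 0 < F ∧ Lm R t m 0 = (F : ℂ) := by
    intro N
    induction N with
    | zero =>
      intro m hm
      rw [Nat.cast_zero, add_zero] at hm
      obtain ⟨c, hc, hL⟩ := Lm_real hk hR ht hm
      refine ⟨_, mul_pos hc ?_, hL 0⟩
      have hs : 1 < m - k * ((n : ℝ) - 1) := by linarith
      have hcont := (Aw_continuous (n := n) hs 0).mul (Gd_continuous hk 0 t)
      rw [Imom, integral_pos_iff_support_of_nonneg
        (fun x => mul_nonneg (Aw_nonneg _ _ _) (Gd_nonneg _ _ _ _))
        (integrable_AwGd hk ht hs 0 le_rfl zero_le_one)]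
      refine IsOpen.measure_pos _ (hcont.isOpen_support) ⟨fun i : Fin n => (i : ℝ) + 1, ?_⟩
      have hx : (fun i : Fin n => (i : ℝ) + 1) ∈ Rplus n := fun i => by positivity
      rw [Function.mem_support]
      refine (mul_pos ?_ (mul_pos (Real.exp_pos _) ?_)).ne'
      · rw [Aw_pos _ _ hx]
        exact mul_pos (Finset.prod_pos fun j _ => pow_pos (hx j) _)
          (Finset.prod_pos fun j _ => Real.rpow_pos_of_pos (hx j) _)
      · refine Finset.prod_pos fun p _ => Finset.prod_pos fun q hq => Real.rpow_pos_of_pos ?_ _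
        have hqp : q ≠ p := by simpa using hq
        have : ((q : ℝ) + 1) - ((p : ℝ) + 1) ≠ 0 := by
          rw [add_sub_add_right_eq_sub, sub_ne_zero]
          exact_mod_cast fun h => hqp (Fin.ext h)
        positivity
    | succ N ih =>
      intro m hm
      obtain ⟨F, hF, hL⟩ := ih (m + 1) (by push_cast at hm; linarith)
      refine ⟨t ^ n * F, by positivity, ?_⟩
      rw [Lm_zero_shift hk hR ht]
      push_cast at hL ⊢
      rw [hL]
  obtain ⟨N, hN⟩ := exists_nat_gt (k * ((n : ℝ) - 1) + 1 - m)
  exact key N m (by linarith)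

/-! ### Nonnegativity of the moments on the Wallach set -/

lemma sum_gam (β : Fin n → ℕ) {i l : Fin n} (hl : l ≠ i) {j : ℕ} (hj : j ≤ β i) :
    ∑ x, gam β i l j x = ∑ x, β x := by
  have hs : ∀ f : Fin n → ℕ, ∑ x, f x = f i + (f l + ∑ x ∈ (univ.erase i).erase l, f x) := by
    intro f
    rw [Finset.add_sum_erase _ _ (by simp [hl]), Finset.add_sum_erase _ _ (by simp)]
  rw [hs, hs β]
  have h1 : gam β i l j i = β l + j := by simp [gam, Function.update_of_ne hl.symm]
  have h2 : gam β i l j l = β i - j := by simp [gam]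
  have h3 : ∑ x ∈ (univ.erase i).erase l, gam β i l j x = ∑ x ∈ (univ.erase i).erase l, β x := by
    refine Finset.sum_congr rfl fun x hx => ?_
    simp only [Finset.mem_erase, Finset.mem_univ, and_true] at hx
    rw [gam, Function.update_of_ne hx.1, Function.update_of_ne hx.2]
  rw [h1, h2, h3]; omega

/-- The set of indices of the nonzero entries of a multi-index. -/
def supp (α : Fin n → ℕ) : Finset (Fin n) := univ.filter fun i => α i ≠ 0

lemma mem_supp {α : Fin n → ℕ} {i : Fin n} : i ∈ supp α ↔ α i ≠ 0 := by simp [supp]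

/-- The exponent vectors produced by symmetrisation have at least as many nonzero entries as
`β`, provided `β i ≠ 0`. -/
lemma card_supp_gam (β : Fin n → ℕ) {i l : Fin n} (hl : l ≠ i) (hi : 1 ≤ β i) {j : ℕ}
    (hj : j < β i + 1 - β l) : (supp β).card ≤ (supp (gam β i l j)).card := by
  have h1 : gam β i l j i = β l + j := by simp [gam, Function.update_of_ne hl.symm]
  have h2 : gam β i l j l = β i - j := by simp [gam]
  have h3 : ∀ x, x ≠ l → x ≠ i → gam β i l j x = β x := fun x hx hx' => by
    rw [gam, Function.update_of_ne hx, Function.update_of_ne hx']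
  by_cases hi0 : gam β i l j i = 0
  · have hl0 : l ∉ (supp β).erase i := by
      simp only [Finset.mem_erase, mem_supp]; omega
    have : insert l ((supp β).erase i) ⊆ supp (gam β i l j) := by
      intro x hx
      rw [mem_supp]
      rcases Finset.mem_insert.1 hx with rfl | hx
      · omega
      · have hxi := Finset.ne_of_mem_erase hx
        have hx := mem_supp.1 (Finset.mem_of_mem_erase hx)
        by_cases hxl : x = l
        · subst hxl; omega
        · rwa [h3 x hxl hxi]
    have h := Finset.card_le_card this
    rw [Finset.card_insert_of_notMem hl0, Finset.card_erase_of_mem (mem_supp.2 (by omega))] at h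
    omega
  · refine Finset.card_le_card fun x hx => ?_
    rw [mem_supp] at hx ⊢
    by_cases hxi : x = i
    · subst hxi; exact hi0
    by_cases hxl : x = l
    · subst hxl; omega
    · rwa [h3 x hxl hxi]

/-- A nonzero multi-index is obtained by raising, by one, an entry which then is maximal. -/
lemma exists_argmax (α : Fin n → ℕ) (h : α ≠ 0) : ∃ (i : Fin n) (β : Fin n → ℕ),
    α = β + Pi.single i 1 ∧ (∀ l, l ≠ i → β l = α l) ∧ (∀ l, α l ≤ β i + 1) ∧ α i = β i + 1 := by
  obtain ⟨j, hj⟩ := Function.ne_iff.1 h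
  obtain ⟨i, -, hi⟩ := Finset.exists_max_image univ α ⟨j, mem_univ j⟩
  have hpos : 1 ≤ α i := le_trans (Nat.one_le_iff_ne_zero.2 hj) (hi j (mem_univ j))
  refine ⟨i, Function.update α i (α i - 1), ?_, ?_, ?_, ?_⟩
  · ext x
    by_cases hx : x = i
    · subst hx; simp; omega
    · simp [hx]
  · intro l hl; simp [hl]
  · intro l; have := hi l (mem_univ l); simp; omega
  · simp; omega

/-- At the discrete Wallach point `μ = kr` the moments of multi-indices with more than `r` nonzero
entries vanish. -/
lemma Lm_vanish {k : ℝ} (hk : 0 < k) {R : ℂ → (SchwartzMap (Fin n → ℝ) ℂ →L[ℂ] ℂ)}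
    (hR : IsRieszFamily n k R) {t : ℝ} (ht : 0 < t) (r : ℕ) (N : ℕ) :
    ∀ α : Fin n → ℕ, ∑ x, α x = N → r < (supp α).card → Lm R t ((k * r : ℝ) : ℂ) α = 0 := by
  induction N using Nat.strong_induction_on with
  | _ N ih =>
  intro α hN hr
  have hα : α ≠ 0 := by rintro rfl; simp [supp] at hr
  have htc : (t : ℂ) ≠ 0 := by exact_mod_cast ht.ne'
  obtain ⟨i, β, hαβ, hl, hmax, hi⟩ := exists_argmax α hα
  rcases Nat.eq_zero_or_pos (β i) with h0 | hpos
  · have hind : α = ind (supp α) := by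
      ext x
      have := hmax x
      simp only [ind, mem_supp]
      split_ifs <;> omega
    have h := Lm_ind hk hR ht ((k * r : ℝ) : ℂ) (supp α)
    rw [← hind, Finset.prod_eq_zero (Finset.mem_range.2 hr) (by push_cast; ring), zero_mul] at h
    exact (mul_eq_zero.1 h).resolve_left (pow_ne_zero _ htc)
  · have hsum : ∑ x, α x = ∑ x, β x + 1 := by
      rw [hαβ]; simp [Finset.sum_add_distrib]
    have hsupp : supp α = supp β := by
      ext x
      rw [mem_supp, mem_supp]
      by_cases hx : x = i
      · subst hx; omega
      · rw [hl x hx]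
    have h := Lm_rec hk hR ht ((k * r : ℝ) : ℂ) β i fun l hli => by rw [hl l hli]; exact hmax l
    rw [← hαβ, ih _ (by omega) β rfl (hsupp ▸ hr), mul_zero, zero_add, Finset.sum_eq_zero,
      mul_zero] at h
    · exact (mul_eq_zero.1 h).resolve_left htc
    · intro l hl'
      have hli : l ≠ i := by simpa using hl'
      refine Finset.sum_eq_zero fun j hj => ?_
      have hj := Finset.mem_range.1 hj
      refine ih (∑ x, β x) (by omega) _ (sum_gam β hli (by omega)) ?_
      have := card_supp_gam β hli hpos hj
      rw [hsupp] at hr; omega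

/-- On the generalized Wallach set all exponential moments are nonnegative. -/
lemma Lm_nonneg {k : ℝ} (hk : 0 < k) {R : ℂ → (SchwartzMap (Fin n → ℝ) ℂ →L[ℂ] ℂ)}
    (hR : IsRieszFamily n k R) {t : ℝ} (ht : 0 < t) {m : ℝ} (r : ℕ)
    (hmr : k * ((r : ℝ) - 1) ≤ m) (hmr' : r < n → m = k * r) (N : ℕ) :
    ∀ α : Fin n → ℕ, ∑ x, α x = N → ∃ c : ℝ, 0 ≤ c ∧ Lm R t m α = (c : ℂ) := by
  induction N using Nat.strong_induction_on with
  | _ N ih =>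
  intro α hN
  by_cases hr : r < (supp α).card
  · have hrn : r < n := hr.trans_le (by simpa using Finset.card_le_univ (supp α))
    refine ⟨0, le_rfl, ?_⟩
    rw [hmr' hrn, Lm_vanish hk hR ht r N α hN hr, Complex.ofReal_zero]
  by_cases hα : α = 0
  · subst hα
    obtain ⟨F, hF, h⟩ := Lm_zero_pos hk hR ht m
    exact ⟨F, hF.le, h⟩
  obtain ⟨i, β, hαβ, hl, hmax, hi⟩ := exists_argmax α hα
  have hsum : ∑ x, α x = ∑ x, β x + 1 := by
    rw [hαβ]; simp [Finset.sum_add_distrib]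
  have hf : ∀ γ : Fin n → ℕ, ∑ x, γ x = ∑ x, β x →
      Lm R t m γ = ((Lm R t m γ).re : ℂ) ∧ 0 ≤ (Lm R t m γ).re := by
    intro γ hγ
    obtain ⟨c, hc, h⟩ := ih _ (by omega) γ hγ
    rw [h]; simpa using hc
  set f : (Fin n → ℕ) → ℝ := fun γ => (Lm R t m γ).re with hfdef
  have h := Lm_rec hk hR ht (m : ℂ) β i fun l hli => by rw [hl l hli]; exact hmax l
  have hS : ∑ l ∈ ({i}ᶜ : Finset (Fin n)), ∑ j ∈ Finset.range (β i + 1 - β l),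
        Lm R t m (gam β i l j) = ((∑ l ∈ ({i}ᶜ : Finset (Fin n)),
        ∑ j ∈ Finset.range (β i + 1 - β l), f (gam β i l j) : ℝ) : ℂ) := by
    push_cast
    refine Finset.sum_congr rfl fun l hl' => Finset.sum_congr rfl fun j hj => ?_
    have hli : l ≠ i := by simpa using hl'
    exact (hf _ (sum_gam β hli (by have := Finset.mem_range.1 hj; omega))).1
  rw [← hαβ, hS, (hf β rfl).1] at h
  -- The coefficient `m - k (n - 1) + β i` may be negative. Each `l ∈ P` contributes a term `k * f β` to
  -- the double sum, which raises the coefficient to `m - k |Q| + β i`, and `|Q| ≤ r - 1` because the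
  -- entries of `α` over `Q ∪ {i}` are nonzero.
  set P := (({i}ᶜ : Finset (Fin n)).filter fun l => β l ≤ β i) with hP
  set Q := (({i}ᶜ : Finset (Fin n)).filter fun l => ¬ β l ≤ β i) with hQ
  have hPQ : P.card + Q.card = n - 1 := by
    rw [hP, hQ, Finset.card_filter_add_card_filter_not, Finset.card_compl]; simp
  have hQr : Q.card + 1 ≤ r := by
    have hiQ : i ∉ Q := by simp [hQ]
    rw [← Finset.card_insert_of_notMem hiQ]
    refine (Finset.card_le_card fun x hx => ?_).trans (not_lt.1 hr)
    rw [mem_supp]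
    rcases Finset.mem_insert.1 hx with rfl | hx
    · omega
    · simp only [hQ, Finset.mem_filter, Finset.mem_compl, Finset.mem_singleton] at hx
      have := hl x hx.1; omega
  have hn1 : 1 ≤ n := i.pos
  have hlow : P.card * f β ≤ ∑ l ∈ ({i}ᶜ : Finset (Fin n)),
        ∑ j ∈ Finset.range (β i + 1 - β l), f (gam β i l j) := by
    rw [← nsmul_eq_mul, ← Finset.sum_const]
    have hnn : ∀ l, l ∈ ({i}ᶜ : Finset (Fin n)) → ∀ j ∈ Finset.range (β i + 1 - β l),
        0 ≤ f (gam β i l j) := fun l hl' j hj =>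
      (hf _ (sum_gam β (by simpa using hl') (by have := Finset.mem_range.1 hj; omega))).2
    refine le_trans (Finset.sum_le_sum fun l hl' => ?_) (Finset.sum_le_sum_of_subset_of_nonneg
      (Finset.filter_subset _ _) fun l hl' _ => Finset.sum_nonneg (hnn l hl'))
    obtain ⟨hl1, hl2⟩ := Finset.mem_filter.1 hl'
    have hg : gam β i l (β i - β l) = β := by
      have hli : l ≠ i := by simpa using hl1
      have e1 : β l + (β i - β l) = β i := by omega
      have e2 : β i - (β i - β l) = β l := by omega
      rw [gam, e1, e2, Function.update_eq_self, Function.update_eq_self]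
    have := Finset.single_le_sum (hnn l hl1) (Finset.mem_range.2
      (show β i - β l < β i + 1 - β l by omega))
    rwa [hg] at this
  set Z := ∑ l ∈ ({i}ᶜ : Finset (Fin n)),
        ∑ j ∈ Finset.range (β i + 1 - β l), f (gam β i l j)
  have hfβ : 0 ≤ f β := (hf β rfl).2
  have hPQ' : (P.card : ℝ) = n - 1 - Q.card := by
    have : P.card + Q.card + 1 = n := by omega
    have : (P.card : ℝ) + Q.card + 1 = n := by exact_mod_cast this
    linarith
  have hQr' : (Q.card : ℝ) + 1 ≤ r := by exact_mod_cast hQr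
  refine ⟨((m - k * ((n : ℝ) - 1) + β i) * f β + k * Z) / t, div_nonneg ?_ ht.le, ?_⟩
  · have h1 : 0 ≤ (m - k * Q.card + β i) * f β := by
      refine mul_nonneg ?_ hfβ
      have : k * Q.card ≤ k * ((r : ℝ) - 1) := by gcongr; linarith
      have : (0 : ℝ) ≤ β i := by positivity
      linarith
    have h2 := mul_le_mul_of_nonneg_left hlow hk.le
    rw [hPQ'] at h2
    nlinarith
  · have htc : (t : ℂ) ≠ 0 := by exact_mod_cast ht.ne'
    have e : Lm R t m α = (t * Lm R t m α) / t := by field_simp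
    rw [e, h]; push_cast; rfl

/-! ### Necessity of the Wallach condition -/

/-- Positivity of a tempered distribution: nonnegativity on nonnegative Schwartz functions. -/
def IsPos (T : SchwartzMap (Fin n → ℝ) ℂ →L[ℂ] ℂ) : Prop :=
  ∀ φ : SchwartzMap (Fin n → ℝ) ℂ, (∀ x, 0 ≤ (φ x).re ∧ (φ x).im = 0) →
    0 ≤ (T φ).re ∧ (T φ).im = 0

lemma mono_ind (A : Finset (Fin n)) (x : Fin n → ℝ) : mono (ind A) x = ∏ i ∈ A, (x i : ℂ) := by
  rw [mono, ← Finset.prod_subset (Finset.subset_univ A)]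
  · exact Finset.prod_congr rfl fun i hi => by simp [ind, hi]
  · intro i _ hi; simp [ind, hi]

/-- Testing `R_μ` against the nonnegative function `∏_{i∈S} (x_i+1) e^{-t∑x}`. -/
lemma pos_sum_ind {R : ℂ → (SchwartzMap (Fin n → ℝ) ℂ →L[ℂ] ℂ)} {μ : ℂ} (hT : IsPos (R μ))
    {t : ℝ} (ht : 0 < t) (S : Finset (Fin n)) :
    0 ≤ (∑ A ∈ S.powerset, Lm R t μ (ind A)).re ∧ (∑ A ∈ S.powerset, Lm R t μ (ind A)).im = 0 := by
  have h := hT (∑ A ∈ S.powerset, smulT (mono (ind A)) (expS n t)) fun x => by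
    have e : (∑ A ∈ S.powerset, smulT (mono (ind A)) (expS n t)) x =
        (((∏ i ∈ S, (x i + 1)) * expR n t x : ℝ) : ℂ) := by
      rw [_root_.sum_apply]
      push_cast
      rw [Finset.prod_add_one, Finset.sum_mul]
      refine Finset.sum_congr rfl fun A _ => ?_
      rw [smulT_apply (mono_temperate _), expS_apply ht, expFun_eq, mono_ind]
    rw [e]
    refine ⟨?_, Complex.ofReal_im _⟩
    rw [Complex.ofReal_re]
    by_cases hx : ∃ i, x i ≤ -1
    · obtain ⟨i, hi⟩ := hx
      rw [expR_zero t hi, mul_zero]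
    · push Not at hx
      exact mul_nonneg (Finset.prod_nonneg fun i _ => by linarith [hx i]) (expR_nonneg t x)
  rwa [map_sum] at h

/-- Positivity forces the falling products `∏_{c<j} (μ - kc)` to be nonnegative. -/
lemma pos_prod {k : ℝ} (hk : 0 < k) {R : ℂ → (SchwartzMap (Fin n → ℝ) ℂ →L[ℂ] ℂ)}
    (hR : IsRieszFamily n k R) {m : ℝ} (hT : IsPos (R m)) {j : ℕ} (hj : j ≤ n) :
    0 ≤ ∏ c ∈ Finset.range j, (m - k * c) := by
  obtain ⟨S, -, hS⟩ := Finset.exists_subset_card_eq (s := (univ : Finset (Fin n))) (n := j)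
    (by simpa using hj)
  set P : ℕ → ℝ := fun j => ∏ c ∈ Finset.range j, (m - k * c) with hP
  set f : ℝ → ℝ := fun t => ∑ A ∈ S.powerset, t ^ (S.card - A.card) * P A.card with hf
  have hpos : ∀ t : ℝ, 0 < t → 0 ≤ f t := by
    intro t ht
    obtain ⟨F, hF, hF0⟩ := Lm_zero_pos hk hR ht m
    have key : (t : ℂ) ^ S.card * ∑ A ∈ S.powerset, Lm R t m (ind A) = ((f t * F : ℝ) : ℂ) := by
      rw [Finset.mul_sum, hf]
      push_cast
      rw [Finset.sum_mul]
      refine Finset.sum_congr rfl fun A hA => ?_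
      have hAS := Finset.card_le_card (Finset.mem_powerset.1 hA)
      have h1 := Lm_ind hk hR ht m A
      rw [← hF0, mul_assoc]
      have : ((P A.card : ℝ) : ℂ) = ∏ c ∈ Finset.range A.card, ((m : ℂ) - k * c) := by
        rw [hP]; push_cast; rfl
      rw [this, ← h1, ← mul_assoc, ← pow_add, Nat.sub_add_cancel hAS]
    have h := (pos_sum_ind hT ht S).1
    have h2 : 0 ≤ ((t : ℂ) ^ S.card * ∑ A ∈ S.powerset, Lm R t m (ind A)).re := by
      rw [← Complex.ofReal_pow, Complex.re_ofReal_mul]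
      positivity
    rw [key, Complex.ofReal_re] at h2
    exact nonneg_of_mul_nonneg_left h2 hF
  have hcont : Continuous f := by rw [hf]; fun_prop
  have h0 : f 0 = P j := by
    rw [hf]
    simp only
    rw [Finset.sum_eq_single S]
    · simp [hS]
    · intro A hA hAS
      have : A.card < S.card := Finset.card_lt_card ((Finset.mem_powerset.1 hA).ssubset_of_ne hAS)
      rw [zero_pow (by omega), zero_mul]
    · intro h; exact absurd (Finset.mem_powerset_self S) h
  -- In the limit `t → 0` only the summand `A = S` survives.
  have hlim := (hcont.tendsto 0).mono_left (nhdsWithin_le_nhds (s := Set.Ioi 0))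
  rw [h0] at hlim
  exact ge_of_tendsto hlim (by
    filter_upwards [self_mem_nhdsWithin] with t ht using hpos t ht)

/-- The first factor `m - kc` that is not positive can only be zero, since the product up to it
is nonnegative. -/
lemma wallach_of_prod {k m : ℝ} (h : ∀ j ≤ n, 0 ≤ ∏ c ∈ Finset.range j, (m - k * c)) :
    ∀ j ≤ n, (∃ r < j, m = k * r) ∨ ∀ c < j, k * c < m := by
  intro j
  induction j with
  | zero => intro _; right; intro c hc; omega
  | succ j ih =>
    intro hj
    rcases ih (by omega) with ⟨r, hr, hm⟩ | hc
    · exact Or.inl ⟨r, by omega, hm⟩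
    · have h1 := h (j + 1) hj
      rw [Finset.prod_range_succ] at h1
      have h2 : 0 < ∏ c ∈ Finset.range j, (m - k * c) :=
        Finset.prod_pos fun c hc' => sub_pos.2 (hc c (Finset.mem_range.1 hc'))
      have h3 := nonneg_of_mul_nonneg_right h1 h2
      rcases h3.eq_or_lt with h4 | h4
      · exact Or.inl ⟨j, by omega, by linarith⟩
      · right
        intro c hc'
        rcases Nat.lt_succ_iff_lt_or_eq.1 hc' with h5 | rfl
        · exact hc c h5
        · linarith

/-- For nonreal `μ` positivity forces the total exponential mass to vanish: both `L(0)` and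
`L(e_1) = μ L(0)` are real. -/
lemma pos_exp_zero {k : ℝ} (hk : 0 < k) (hn : 0 < n)
    {R : ℂ → (SchwartzMap (Fin n → ℝ) ℂ →L[ℂ] ℂ)}
    (hR : IsRieszFamily n k R) {μ : ℂ} (hT : IsPos (R μ)) (hμ : μ.im ≠ 0) :
    R μ (expS n 1) = 0 := by
  have hind0 : ind (∅ : Finset (Fin n)) = 0 := by ext; simp [ind]
  have h0 := pos_sum_ind hT one_pos ∅
  have h1 := pos_sum_ind hT one_pos {⟨0, hn⟩}
  have h2 := Lm_ind_insert hk hR one_pos μ ∅ ⟨0, hn⟩ (by simp)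
  rw [Finset.powerset_empty, Finset.sum_singleton, hind0] at h0
  have hps : ({⟨0, hn⟩} : Finset (Fin n)).powerset = {∅, {⟨0, hn⟩}} := by
    ext A; simp [Finset.subset_singleton_iff]
  rw [hps, Finset.sum_pair (by simp), hind0, Complex.add_im] at h1
  simp only [Finset.card_empty, Nat.cast_zero, mul_zero, sub_zero, Complex.ofReal_one, one_mul,
    hind0, insert_empty_eq] at h2
  have h3 : (Lm R 1 μ (ind {⟨0, hn⟩})).im = 0 := by linarith [h1.2, h0.2]
  rw [h2, Complex.mul_im, h0.2, mul_zero, zero_add] at h3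
  rw [← Lm_zero]
  exact Complex.ext ((mul_eq_zero.1 h3).resolve_left hμ) h0.2

/-- Nonnegative Schwartz functions with compact support in the open orthant. -/
structure Good (ρ : SchwartzMap (Fin n → ℝ) ℂ) : Prop where
  nonneg : ∀ x, 0 ≤ (ρ x).re ∧ (ρ x).im = 0
  compact : HasCompactSupport ρ
  support : ∀ x, ρ x ≠ 0 → x ∈ Rplus n

lemma Good.shift {ρ : SchwartzMap (Fin n → ℝ) ℂ} (h : Good ρ) :
    Good (smulT (mono fun _ => 1) ρ) := by
  have e : ∀ x, smulT (mono fun _ => 1) ρ x = mono (fun _ => 1) x * ρ x :=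
    smulT_apply (mono_temperate _) _
  refine ⟨fun x => ?_, ?_, fun x hx => ?_⟩
  · by_cases hx : ρ x = 0
    · rw [e, hx]; simp
    · have hx' := h.support x hx
      have : mono (fun _ => 1) x = ((∏ i, x i : ℝ) : ℂ) := by simp [mono]
      rw [e, this, Complex.re_ofReal_mul, Complex.im_ofReal_mul, (h.nonneg x).2, mul_zero]
      exact ⟨mul_nonneg (Finset.prod_nonneg fun i _ => (hx' i).le) (h.nonneg x).1, rfl⟩
  · refine h.compact.mono fun x hx => ?_
    rw [Function.mem_support, e] at hx
    exact right_ne_zero_of_mul hx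
  · rw [e] at hx; exact h.support x (right_ne_zero_of_mul hx)

/-- A positive distribution annihilating the exponential annihilates everything that is
dominated by a multiple of it. -/
lemma Good.vanish {T : SchwartzMap (Fin n → ℝ) ℂ →L[ℂ] ℂ} (hT : IsPos T)
    (h0 : T (expS n 1) = 0) {ρ : SchwartzMap (Fin n → ℝ) ℂ} (h : Good ρ) : T ρ = 0 := by
  have hc : Continuous fun x : Fin n → ℝ => ρ x * Real.exp (∑ i, x i) := by
    have := ρ.continuous
    fun_prop
  obtain ⟨C, hC⟩ := h.compact.mul_right (f' := fun x : Fin n → ℝ => (Real.exp (∑ i, x i) : ℂ))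
    |>.exists_bound_of_continuous hc
  have h1 := hT ρ h.nonneg
  have h2 := hT ((C : ℂ) • expS n 1 - ρ) fun x => by
    have e : ((C : ℂ) • expS n 1 - ρ) x = ((C * expR n 1 x : ℝ) : ℂ) - ρ x := by
      simp [expS_apply one_pos, expFun_eq]
    rw [e, Complex.sub_re, Complex.sub_im, Complex.ofReal_re, Complex.ofReal_im, (h.nonneg x).2]
    refine ⟨?_, by ring⟩
    have hC0 : 0 ≤ C := (norm_nonneg _).trans (hC x)
    by_cases hx : ρ x = 0
    · rw [hx]; simpa using mul_nonneg hC0 (expR_nonneg 1 x)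
    · have hx' := h.support x hx
      have hCx : ‖ρ x‖ * Real.exp (∑ i, x i) ≤ C := by
        have := hC x
        simp only [Pi.mul_apply, norm_mul, Complex.norm_real, Real.norm_eq_abs, Real.abs_exp] at this
        exact this
      rw [expR_eq 1 fun i => (hx' i).le]
      have h3 : (ρ x).re ≤ ‖ρ x‖ := Complex.re_le_norm _
      have h4 : ‖ρ x‖ ≤ C * Real.exp (-1 * ∑ i, x i) := by
        rw [neg_one_mul, Real.exp_neg, ← div_eq_mul_inv, le_div_iff₀ (Real.exp_pos _)]
        exact hCx
      linarith
  rw [map_sub, map_smul, h0, smul_zero, zero_sub, Complex.neg_re] at h2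
  exact Complex.ext (le_antisymm (by simpa using h2.1) h1.1) h1.2

/-- Multiplication by `D` maps the class `Good` to itself, and the scalar `∏ (μ - kj)` relating
`R_{μ+1}` to `D · R_μ` does not vanish for nonreal `μ`. -/
lemma Good.vanish_shift {k : ℝ} (hk : 0 < k) {R : ℂ → (SchwartzMap (Fin n → ℝ) ℂ →L[ℂ] ℂ)}
    (hR : IsRieszFamily n k R) {μ : ℂ} (hμ : μ.im ≠ 0)
    (h0 : ∀ ρ, Good ρ → R μ ρ = 0) (M : ℕ) : ∀ ρ, Good ρ → R (μ + M) ρ = 0 := by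
  induction M with
  | zero => simpa using h0
  | succ M ih =>
    intro ρ hρ
    have h := riesz_shift hk hR ρ (μ + M)
    rw [ih _ hρ.shift] at h
    have hne : ∏ j ∈ Finset.range n, (μ + M - k * j) ≠ 0 := by
      refine Finset.prod_ne_zero_iff.2 fun j _ hj => hμ ?_
      have := congrArg Complex.im hj
      simpa using this
    push_cast
    rw [← add_assoc]
    exact (mul_eq_zero.1 h.symm).resolve_left hne

lemma wk_continuous {k : ℝ} (hk : 0 < k) : Continuous (wk n k) := by
  unfold wk
  refine continuous_finsetProd _ fun i _ => continuous_finsetProd _ fun j _ => ?_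
  exact Continuous.rpow_const (by fun_prop) fun x => Or.inr (by positivity)

/-- In the range of absolute convergence `R_μ` does not vanish on all test functions supported in
the orthant: a bump near a point with distinct coordinates detects it. -/
lemma exists_good_ne {k : ℝ} (hk : 0 < k) {R : ℂ → (SchwartzMap (Fin n → ℝ) ℂ →L[ℂ] ℂ)}
    (hR : IsRieszFamily n k R) {μ : ℂ} (hμ : k * ((n : ℝ) - 1) < μ.re) :
    ∃ ρ, Good ρ ∧ R μ ρ ≠ 0 := by
  set ν : ℂ := μ - ((k * ((n : ℝ) - 1) : ℝ) : ℂ) - 1 with hν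
  set h : (Fin n → ℝ) → ℂ := fun x => ∏ i, (x i : ℂ) ^ ν with hh
  set p : Fin n → ℝ := fun i => 1 + (i : ℝ) with hp
  have hppos : ∀ i, 0 < p i := fun i => by simp only [hp]; positivity
  have hhp : h p ≠ 0 := Finset.prod_ne_zero_iff.2 fun i _ => by
    rw [Ne, Complex.cpow_eq_zero_iff, not_and_or]
    left; exact_mod_cast (hppos i).ne'
  have hwp : 0 < wk n k p := by
    refine Finset.prod_pos fun i _ => Finset.prod_pos fun j hj => Real.rpow_pos_of_pos ?_ _
    rw [abs_pos, sub_ne_zero]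
    simp only [hp]
    intro he
    have : i = j := by
      apply Fin.ext
      have : (i : ℝ) = j := by linarith
      exact_mod_cast this
    exact (Finset.mem_Ioi.1 hj).ne this
  have hhc : ∀ x ∈ Rplus n, ContinuousAt h x := fun x hx => by
    refine tendsto_finsetProd _ fun i _ => ?_
    have : ContinuousAt (fun z : ℂ => z ^ ν) (x i : ℂ) :=
      continuousAt_cpow_const (Or.inl (by simpa using hx i))
    exact this.comp (f := fun x : Fin n → ℝ => (x i : ℂ))
      (Complex.continuous_ofReal.comp (continuous_apply i)).continuousAt
  -- The power `h` is complex-valued; rotating by `conj (h p)` makes its real part positive near `p`.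
  set G : (Fin n → ℝ) → ℝ := fun x => (starRingEnd ℂ (h p) * h x).re * wk n k x with hG
  have hGc : ∀ x ∈ Rplus n, ContinuousAt G x := fun x hx =>
    (Complex.continuous_re.continuousAt.comp
      (continuousAt_const.mul (hhc x hx))).mul (wk_continuous hk).continuousAt
  have hGp : 0 < G p := by
    refine mul_pos ?_ hwp
    rw [mul_comm, Complex.mul_conj, Complex.ofReal_re]
    exact Complex.normSq_pos.2 hhp
  have hRo : IsOpen (Rplus n) := by
    have : Rplus n = ⋂ i, {x | 0 < x i} := by ext; simp [Rplus]
    rw [this]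
    exact isOpen_iInter_of_finite fun i => isOpen_lt continuous_const (continuous_apply i)
  have hnear : ∀ᶠ x in nhds p, x ∈ Rplus n ∧ 0 < G x :=
    (hRo.eventually_mem hppos).and ((hGc p hppos).eventually_const_lt hGp)
  obtain ⟨r, hr, hball⟩ := Metric.nhds_basis_closedBall.mem_iff.1 hnear
  let f : ContDiffBump p := ⟨r / 2, r, by linarith, by linarith⟩
  have hfs : HasCompactSupport (fun x => (f x : ℂ)) := f.hasCompactSupport.comp_left (g := fun y : ℝ => (y : ℂ)) (by simp)
  have hfc : ContDiff ℝ ((⊤ : ℕ∞) : WithTop ℕ∞) (fun x => (f x : ℂ)) :=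
    Complex.ofRealCLM.contDiff.comp f.contDiff
  have hf0 : ∀ x, x ∉ Metric.closedBall p r → f x = 0 := fun x hx => by
    by_contra hne
    have : x ∈ Function.support f := hne
    rw [f.support_eq] at this
    exact hx (Metric.ball_subset_closedBall this)
  refine ⟨hfs.toSchwartzMap hfc, ⟨fun x => ?_, hfs, fun x hx => ?_⟩, fun h0 => ?_⟩
  · change 0 ≤ ((f x : ℝ) : ℂ).re ∧ ((f x : ℝ) : ℂ).im = 0
    exact ⟨by simpa using f.nonneg, Complex.ofReal_im _⟩
  · have hx' : ((f x : ℝ) : ℂ) ≠ 0 := hx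
    by_contra hxR
    exact hx' (by rw [hf0 x fun hb => hxR (hball hb).1]; simp)
  · rw [hR.2 μ hμ] at h0
    have hdG : ((dnk n k : ℂ) * Gammank n k μ)⁻¹ ≠ 0 := inv_ne_zero
      (mul_ne_zero (by exact_mod_cast (dnk_pos hk).ne') (Gammank_ne_zero hk hμ))
    have h1 := (mul_eq_zero.1 h0).resolve_left hdG
    set K := Metric.closedBall p r
    have hKR : K ⊆ Rplus n := fun x hx => (hball hx).1
    have h2 : ∫ x in K, (f x : ℂ) * h x * (wk n k x : ℂ) = 0 := by
      rw [← h1]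
      refine (setIntegral_eq_of_subset_of_forall_sdiff_eq_zero measurableSet_Rplus hKR
        fun x hx => ?_).symm
      change (f x : ℂ) * h x * (wk n k x : ℂ) = 0
      rw [hf0 x hx.2]; simp
    have hKc : IsCompact K := isCompact_closedBall p r
    have hInt : IntegrableOn (fun x => (f x : ℂ) * h x * (wk n k x : ℂ)) K := by
      refine ContinuousOn.integrableOn_compact hKc fun x hx => ContinuousAt.continuousWithinAt ?_
      have := f.continuous
      have := wk_continuous (n := n) hk
      exact ((by fun_prop : Continuous fun x => (f x : ℂ)).continuousAt.mul (hhc x (hKR hx))).mul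
        (by fun_prop : Continuous fun x => (wk n k x : ℂ)).continuousAt
    have h3 : ∫ x in K, f x * G x = 0 := by
      have := integral_re (hInt.const_mul (starRingEnd ℂ (h p)))
      rw [integral_const_mul, h2, mul_zero] at this
      simp only [map_zero] at this
      rw [← this]
      refine setIntegral_congr_fun hKc.measurableSet fun x _ => ?_
      change f x * G x = (starRingEnd ℂ (h p) * ((f x : ℂ) * h x * (wk n k x : ℂ))).re
      have : starRingEnd ℂ (h p) * ((f x : ℂ) * h x * (wk n k x : ℂ)) =
          ((f x * wk n k x : ℝ) : ℂ) * (starRingEnd ℂ (h p) * h x) := by push_cast; ring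
      rw [this, Complex.re_ofReal_mul, hG]; ring
    have hInt2 : IntegrableOn (fun x => f x * G x) K :=
      ContinuousOn.integrableOn_compact hKc fun x hx => ContinuousAt.continuousWithinAt
        (f.continuous.continuousAt.mul (hGc x (hKR hx)))
    have h4 : 0 < ∫ x in K, f x * G x := by
      rw [setIntegral_pos_iff_support_of_nonneg_ae _ hInt2]
      · refine lt_of_lt_of_le (Metric.measure_ball_pos volume p hr) (measure_mono fun x hx => ?_)
        have hxK := Metric.ball_subset_closedBall hx
        refine ⟨(mul_pos (f.pos_of_mem_ball hx) (hball hxK).2).ne', hxK⟩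
      · refine (ae_restrict_iff' hKc.measurableSet).2 (Filter.Eventually.of_forall fun x hx => ?_)
        exact mul_nonneg f.nonneg (hball hx).2.le
    exact h4.ne' h3

/-- Positivity implies that the parameter is in the generalized Wallach set. -/
lemma wallach_of_isPos {k : ℝ} (hn : 2 ≤ n) (hk : 0 < k)
    {R : ℂ → (SchwartzMap (Fin n → ℝ) ℂ →L[ℂ] ℂ)}
    (hR : IsRieszFamily n k R) {μ : ℂ} (hT : IsPos (R μ)) :
    μ.im = 0 ∧ ((∃ r : ℕ, r ≤ n - 1 ∧ μ.re = k * r) ∨ k * ((n : ℝ) - 1) < μ.re) := by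
  have him : μ.im = 0 := by
    by_contra him
    have h0 : ∀ ρ, Good ρ → R μ ρ = 0 := fun ρ hρ =>
      hρ.vanish hT (pos_exp_zero hk (by omega) hR hT him)
    obtain ⟨M, hM⟩ := exists_nat_gt (k * ((n : ℝ) - 1) - μ.re)
    obtain ⟨ρ, hρ, hne⟩ := exists_good_ne hk hR (μ := μ + M) (by simp; linarith)
    exact hne (Good.vanish_shift hk hR him h0 M ρ hρ)
  refine ⟨him, ?_⟩
  have hμ : μ = (μ.re : ℂ) := Complex.ext (by simp) (by simp [him])
  rw [hμ] at hT
  rcases wallach_of_prod (n := n) (fun j hj => pos_prod hk hR hT hj) n le_rfl with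
    ⟨r, hr, h⟩ | h
  · exact Or.inl ⟨r, by omega, h⟩
  · right
    have := h (n - 1) (by omega)
    rwa [Nat.cast_sub (by omega), Nat.cast_one] at this

open scoped ContDiff

/-! ### Difference quotients -/

section Differences

variable {F : Type} [NormedAddCommGroup F] [NormedSpace ℝ F]

/-- The forward difference quotient `m (ψ(u + e_i/m) - ψ(u))`. -/
noncomputable def dq (m : ℝ) (i : Fin n) (ψ : (Fin n → ℝ) → F) (u : Fin n → ℝ) : F :=
  m • (ψ (u + Pi.single i m⁻¹) - ψ u)

/-- The discrete gradient: the linear form whose coordinates are the difference quotients. -/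
noncomputable def grad (m : ℝ) (ψ : (Fin n → ℝ) → F) (u : Fin n → ℝ) : (Fin n → ℝ) →L[ℝ] F :=
  ∑ i, ContinuousLinearMap.smulRightL ℝ (Fin n → ℝ) F (ContinuousLinearMap.proj i) (dq m i ψ u)

lemma dq_contDiff (m : ℝ) (i : Fin n) {ψ : (Fin n → ℝ) → F} (h : ContDiff ℝ ∞ ψ) :
    ContDiff ℝ ∞ (dq m i ψ) := by
  unfold dq; fun_prop

lemma grad_contDiff (m : ℝ) {ψ : (Fin n → ℝ) → F} (h : ContDiff ℝ ∞ ψ) :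
    ContDiff ℝ ∞ (grad m ψ) :=
  ContDiff.sum fun i _ => (ContinuousLinearMap.contDiff _).comp (dq_contDiff m i h)

lemma norm_single_inv {m : ℝ} (hm : 0 < m) (i : Fin n) :
    ‖(Pi.single i m⁻¹ : Fin n → ℝ)‖ = m⁻¹ := by
  rw [Pi.norm_single, Real.norm_eq_abs, abs_of_pos (inv_pos.2 hm)]

/-- Mean value bound for the derivatives of a difference quotient. -/
lemma norm_iteratedFDeriv_dq {m : ℝ} (hm : 0 < m) (i : Fin n) {ψ : (Fin n → ℝ) → F}
    (h : ContDiff ℝ ∞ ψ) {B : ℝ} (a : ℕ) (hB : ∀ u, ‖iteratedFDeriv ℝ (a + 1) ψ u‖ ≤ B)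
    (u : Fin n → ℝ) : ‖iteratedFDeriv ℝ a (dq m i ψ) u‖ ≤ B := by
  have ha : ((a : ℕ∞) : WithTop ℕ∞) ≤ ∞ := by exact_mod_cast le_top
  have h1 : ContDiff ℝ a fun u => ψ (u + (Pi.single i m⁻¹ : Fin n → ℝ)) :=
    (h.of_le ha).comp (contDiff_id.add contDiff_const)
  have e : dq m i ψ = m • ((fun u => ψ (u + (Pi.single i m⁻¹ : Fin n → ℝ))) - ψ) := rfl
  have hs : ContDiffAt ℝ a ((fun u => ψ (u + (Pi.single i m⁻¹ : Fin n → ℝ))) - ψ) u :=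
    (h1.sub (h.of_le ha)).contDiffAt
  rw [e, iteratedFDeriv_const_smul_apply hs,
    iteratedFDeriv_sub_apply h1.contDiffAt (h.of_le ha).contDiffAt, iteratedFDeriv_comp_add_right,
    norm_smul, Real.norm_eq_abs, abs_of_pos hm]
  have h2 := (convex_univ (𝕜 := ℝ) (E := Fin n → ℝ)).norm_image_sub_le_of_norm_fderiv_le (𝕜 := ℝ)
    (f := iteratedFDeriv ℝ a ψ) (C := B)
    (fun x _ => (h.differentiable_iteratedFDeriv (by exact_mod_cast WithTop.coe_lt_top a)) x)
    (fun x _ => by rw [norm_fderiv_iteratedFDeriv]; exact hB x)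
    (Set.mem_univ u) (Set.mem_univ (u + Pi.single i m⁻¹))
  rw [add_sub_cancel_left, norm_single_inv hm] at h2
  calc m * _ ≤ m * (B * m⁻¹) := by gcongr
    _ = B := by field_simp

end Differences

lemma fderiv_contDiff {F : Type} [NormedAddCommGroup F] [NormedSpace ℝ F]
    {ψ : (Fin n → ℝ) → F} (h : ContDiff ℝ ∞ ψ) : ContDiff ℝ ∞ (fderiv ℝ ψ) :=
  h.fderiv_right (by simp)

/-- Difference quotients approximate partial derivatives with error `O(1/m)`, together with all
derivatives. -/
lemma norm_iteratedFDeriv_dq_sub {m : ℝ} (hm : 0 < m) (i : Fin n) {B : ℝ} (a : ℕ) :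
    ∀ (F : Type) [NormedAddCommGroup F] [NormedSpace ℝ F] (ψ : (Fin n → ℝ) → F),
      ContDiff ℝ ∞ ψ → (∀ u, ‖iteratedFDeriv ℝ (a + 2) ψ u‖ ≤ B) → ∀ u,
      ‖iteratedFDeriv ℝ a (fun u => dq m i ψ u - fderiv ℝ ψ u (Pi.single i 1)) u‖ ≤ B / m := by
  induction a with
  | zero =>
    intro F _ _ ψ h hB u
    rw [norm_iteratedFDeriv_zero]
    have hd : Differentiable ℝ ψ := h.differentiable (by simp)
    have hd' : Differentiable ℝ (fderiv ℝ ψ) := (fderiv_contDiff h).differentiable (by simp)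
    have hB0 : 0 ≤ B := (norm_nonneg _).trans (hB u)
    have h1 : ∀ x ∈ Metric.closedBall u m⁻¹, ‖fderiv ℝ ψ x - fderiv ℝ ψ u‖ ≤ B * m⁻¹ := by
      intro x hx
      refine ((convex_univ (𝕜 := ℝ) (E := Fin n → ℝ)).norm_image_sub_le_of_norm_fderiv_le (𝕜 := ℝ)
        (f := fderiv ℝ ψ) (C := B) (fun x _ => hd' x)
        (fun x _ => ?_) (Set.mem_univ u) (Set.mem_univ x)).trans ?_
      · rw [← norm_iteratedFDeriv_zero (𝕜 := ℝ) (f := fderiv ℝ (fderiv ℝ ψ)),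
          norm_iteratedFDeriv_fderiv, norm_iteratedFDeriv_fderiv]
        exact hB x
      · gcongr
        exact mem_closedBall_iff_norm.1 hx
    have h2 := (convex_closedBall u m⁻¹).norm_image_sub_le_of_norm_fderiv_le' (𝕜 := ℝ)
      (f := ψ) (φ := fderiv ℝ ψ u) (fun x _ => hd x) h1
      (Metric.mem_closedBall_self (inv_pos.2 hm).le)
      (show u + Pi.single i m⁻¹ ∈ Metric.closedBall u m⁻¹ by
        rw [mem_closedBall_iff_norm, add_sub_cancel_left, norm_single_inv hm])
    rw [add_sub_cancel_left, norm_single_inv hm] at h2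
    have h3 : (Pi.single i m⁻¹ : Fin n → ℝ) = m⁻¹ • Pi.single i 1 := by
      rw [← Pi.single_smul]; simp
    have h4 : dq m i ψ u - fderiv ℝ ψ u (Pi.single i 1) =
        m • (ψ (u + Pi.single i m⁻¹) - ψ u - fderiv ℝ ψ u (Pi.single i m⁻¹)) := by
      rw [dq, smul_sub m (_ - _), h3, map_smul, smul_smul, mul_inv_cancel₀ hm.ne', one_smul]
    rw [h4, norm_smul, Real.norm_eq_abs, abs_of_pos hm]
    calc m * _ ≤ m * (B * m⁻¹ * m⁻¹) := by gcongr
      _ = B / m := by field_simp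
  | succ a ih =>
    intro F _ _ ψ h hB u
    have hd : Differentiable ℝ ψ := h.differentiable (by simp)
    have hd' : Differentiable ℝ (fderiv ℝ ψ) := (fderiv_contDiff h).differentiable (by simp)
    rw [← norm_iteratedFDeriv_fderiv]
    have e : fderiv ℝ (fun u => dq m i ψ u - fderiv ℝ ψ u (Pi.single i 1)) =
        fun u => dq m i (fderiv ℝ ψ) u - fderiv ℝ (fderiv ℝ ψ) u (Pi.single i 1) := by
      ext1 x
      have h1 : HasFDerivAt (dq m i ψ) (dq m i (fderiv ℝ ψ) x) x := by
        refine HasFDerivAt.const_smul (HasFDerivAt.sub ?_ (hd x).hasFDerivAt) m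
        exact (hasFDerivAt_comp_add_right _).2 (hd _).hasFDerivAt
      have h2 : HasFDerivAt (fun u => fderiv ℝ ψ u (Pi.single i 1))
          ((fderiv ℝ (fderiv ℝ ψ) x).flip (Pi.single i 1)) x := by
        have := (hd' x).hasFDerivAt.clm_apply (hasFDerivAt_const (Pi.single i (1:ℝ)) x)
        simpa using this
      refine (HasFDerivAt.fderiv (h1.sub h2)).trans ?_
      congr 1
      ext w
      exact (h.contDiffAt.isSymmSndFDerivAt
        (by simpa using (by exact_mod_cast le_top : ((2 : ℕ∞) : WithTop ℕ∞) ≤ ∞))) _ _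
    rw [e]
    exact ih _ _ (fderiv_contDiff h) (fun v => by rw [norm_iteratedFDeriv_fderiv]; exact hB v) u

section Gradient

variable {F : Type} [NormedAddCommGroup F] [NormedSpace ℝ F]

lemma norm_proj_le (i : Fin n) :
    ‖(ContinuousLinearMap.proj i : (Fin n → ℝ) →L[ℝ] ℝ)‖ ≤ 1 :=
  ContinuousLinearMap.opNorm_le_bound _ zero_le_one fun x => by
    rw [one_mul]; exact norm_le_pi_norm x i

/-- Assembling `n` functions into a linear form multiplies derivative bounds by at most `n`. -/
lemma norm_iteratedFDeriv_assemble {f : Fin n → (Fin n → ℝ) → F} (h : ∀ i, ContDiff ℝ ∞ (f i))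
    {B : ℝ} (a : ℕ) (u : Fin n → ℝ) (hB : ∀ i, ‖iteratedFDeriv ℝ a (f i) u‖ ≤ B) :
    ‖iteratedFDeriv ℝ a (fun u => ∑ i, ContinuousLinearMap.smulRightL ℝ (Fin n → ℝ) F
      (ContinuousLinearMap.proj i) (f i u)) u‖ ≤ n * B := by
  have ha : ((a : ℕ∞) : WithTop ℕ∞) ≤ ∞ := by exact_mod_cast le_top
  have hc : ∀ i, ContDiff ℝ ∞ fun u => ContinuousLinearMap.smulRightL ℝ (Fin n → ℝ) F
      (ContinuousLinearMap.proj i) (f i u) :=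
    fun i => (ContinuousLinearMap.contDiff _).comp (h i)
  rw [iteratedFDeriv_sum fun i _ => (hc i).of_le ha, Finset.sum_apply]
  refine (norm_sum_le _ _).trans ((Finset.sum_le_sum fun i _ => ?_).trans (b := ∑ _i : Fin n, B)
    (by simp))
  refine (ContinuousLinearMap.norm_iteratedFDeriv_comp_left _ (h i).contDiffAt ha).trans ?_
  have h1 : ‖ContinuousLinearMap.smulRightL ℝ (Fin n → ℝ) F (ContinuousLinearMap.proj i)‖ ≤ 1 :=
    ContinuousLinearMap.opNorm_le_bound _ zero_le_one fun y => by
      rw [one_mul]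
      change ‖(ContinuousLinearMap.proj i : (Fin n → ℝ) →L[ℝ] ℝ).smulRight y‖ ≤ _
      rw [ContinuousLinearMap.norm_smulRight_apply]
      exact mul_le_of_le_one_left (norm_nonneg y) (norm_proj_le i)
  calc _ ≤ 1 * ‖iteratedFDeriv ℝ a (f i) u‖ := by gcongr
    _ ≤ B := by rw [one_mul]; exact hB i

lemma norm_iteratedFDeriv_grad {m : ℝ} (hm : 0 < m) {ψ : (Fin n → ℝ) → F}
    (h : ContDiff ℝ ∞ ψ) {B : ℝ} (a : ℕ) (hB : ∀ u, ‖iteratedFDeriv ℝ (a + 1) ψ u‖ ≤ B)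
    (u : Fin n → ℝ) : ‖iteratedFDeriv ℝ a (grad m ψ) u‖ ≤ n * B :=
  norm_iteratedFDeriv_assemble (fun i => dq_contDiff m i h) a u
    fun i => norm_iteratedFDeriv_dq hm i h a hB u

lemma eq_sum_smulRight (L : (Fin n → ℝ) →L[ℝ] F) :
    L = ∑ i, ContinuousLinearMap.smulRightL ℝ (Fin n → ℝ) F
      (ContinuousLinearMap.proj i) (L (Pi.single i 1)) := by
  ext x
  have h := LinearMap.pi_apply_eq_sum_univ (L : (Fin n → ℝ) →ₗ[ℝ] F) x
  simp only [ContinuousLinearMap.coe_coe] at h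
  rw [h]
  simp only [_root_.sum_apply, ContinuousLinearMap.smulRightL_apply_apply]
  refine Finset.sum_congr rfl fun i _ => ?_
  congr 2
  ext j; simp [Pi.single_apply, eq_comm]

lemma norm_iteratedFDeriv_grad_sub {m : ℝ} (hm : 0 < m) {ψ : (Fin n → ℝ) → F}
    (h : ContDiff ℝ ∞ ψ) {B : ℝ} (a : ℕ) (hB : ∀ u, ‖iteratedFDeriv ℝ (a + 2) ψ u‖ ≤ B)
    (u : Fin n → ℝ) :
    ‖iteratedFDeriv ℝ a (fun u => grad m ψ u - fderiv ℝ ψ u) u‖ ≤ n * (B / m) := by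
  have e : (fun u => grad m ψ u - fderiv ℝ ψ u) =
      fun u => ∑ i, ContinuousLinearMap.smulRightL ℝ (Fin n → ℝ) F
      (ContinuousLinearMap.proj i) (dq m i ψ u - fderiv ℝ ψ u (Pi.single i 1)) := by
    ext1 u
    conv_lhs => rw [eq_sum_smulRight (fderiv ℝ ψ u), grad, ← Finset.sum_sub_distrib]
    simp only [map_sub]
  rw [e]
  refine norm_iteratedFDeriv_assemble (fun i => ?_) a u
    fun i => norm_iteratedFDeriv_dq_sub hm i a F ψ h hB u
  exact (dq_contDiff m i h).sub ((fderiv_contDiff h).clm_apply contDiff_const)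

end Gradient

/-! ### Szász–Mirakyan operators -/

/-- The Poisson weight `e^{-t} t^j / j!`. -/
noncomputable def ps (j : ℕ) (t : ℝ) : ℝ := Real.exp (-t) * (t ^ j / j.factorial)

/-- The Poisson weight `e^{-t} t^{j-1} / (j-1)!`, which is `0` for `j = 0`. -/
noncomputable def psPred : ℕ → ℝ → ℝ
  | 0, _ => 0
  | j + 1, t => ps j t

lemma ps_nonneg (j : ℕ) {t : ℝ} (ht : 0 ≤ t) : 0 ≤ ps j t := by
  unfold ps; positivity

lemma hasDerivAt_ps (j : ℕ) (t : ℝ) : HasDerivAt (ps j) (psPred j t - ps j t) t := by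
  have h1 : HasDerivAt (fun t : ℝ => Real.exp (-t)) (-Real.exp (-t)) t := by
    simpa using (hasDerivAt_neg t).exp
  have h2 := h1.mul ((hasDerivAt_pow j t).div_const (j.factorial : ℝ))
  refine h2.congr_deriv ?_
  cases j with
  | zero => simp [psPred, ps]
  | succ j =>
    have : (j.factorial : ℝ) ≠ 0 := by positivity
    simp only [psPred, ps, Nat.factorial_succ, Nat.add_sub_cancel]
    push_cast
    field_simp
    ring

lemma sum_ps_le (M : ℕ) {t : ℝ} (ht : 0 ≤ t) : ∑ j ∈ range M, ps j t ≤ 1 := by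
  simp only [ps]
  rw [← Finset.mul_sum]
  calc _ ≤ Real.exp (-t) * Real.exp t := by
        gcongr; exact Real.sum_le_exp_of_nonneg ht M
    _ = 1 := by rw [← Real.exp_add]; simp

/-- Product Poisson weight at the multi-index `j`, with parameters `m v_i`. -/
noncomputable def pw (m : ℝ) (j : Fin n → ℕ) (v : Fin n → ℝ) : ℝ := ∏ i, ps (j i) (m * v i)

/-- The derivative of `pw m j`. -/
noncomputable def pwD (m : ℝ) (j : Fin n → ℕ) (v : Fin n → ℝ) : (Fin n → ℝ) →L[ℝ] ℝ :=
  ∑ i, (∏ l ∈ univ.erase i, ps (j l) (m * v l)) •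
    ((m * (psPred (j i) (m * v i) - ps (j i) (m * v i))) •
      (ContinuousLinearMap.proj i : (Fin n → ℝ) →L[ℝ] ℝ))

lemma hasFDerivAt_pw (m : ℝ) (j : Fin n → ℕ) (v : Fin n → ℝ) :
    HasFDerivAt (pw m j) (pwD m j v) v := by
  unfold pw pwD
  refine HasFDerivAt.finsetProd (u := univ) (g := fun i (v : Fin n → ℝ) => ps (j i) (m * v i))
    fun i _ => ?_
  have h1 : HasFDerivAt (fun v : Fin n → ℝ => m * v i)
      (m • (ContinuousLinearMap.proj i : (Fin n → ℝ) →L[ℝ] ℝ)) v :=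
    (hasFDerivAt_apply i v).const_mul m
  refine ((hasDerivAt_ps (j i) (m * v i)).comp_hasFDerivAt v h1).congr_fderiv ?_
  rw [smul_smul, mul_comm]

/-- The box `{0, …, M-1}^n` of multi-indices. -/
def jbox (n M : ℕ) : Finset (Fin n → ℕ) := Fintype.piFinset fun _ => range M

lemma mem_jbox {M : ℕ} {j : Fin n → ℕ} : j ∈ jbox n M ↔ ∀ i, j i < M := by
  simp [jbox]

lemma pw_nonneg {m : ℝ} (hm : 0 ≤ m) (j : Fin n → ℕ) {v : Fin n → ℝ} (hv : ∀ i, 0 ≤ v i) :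
    0 ≤ pw m j v := prod_nonneg fun i _ => ps_nonneg _ (mul_nonneg hm (hv i))

lemma sum_pw_le {m : ℝ} (hm : 0 ≤ m) (M : ℕ) {v : Fin n → ℝ} (hv : ∀ i, 0 ≤ v i) :
    ∑ j ∈ jbox n M, pw m j v ≤ 1 := by
  have h := Finset.prod_univ_sum (fun _ : Fin n => range M) (fun i a => ps a (m * v i))
  unfold jbox pw
  rw [← h]
  exact prod_le_one (fun i _ => sum_nonneg fun a _ => ps_nonneg _ (mul_nonneg hm (hv i)))
    fun i _ => sum_ps_le M (mul_nonneg hm (hv i))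

section

variable {F : Type} [NormedAddCommGroup F] [NormedSpace ℝ F]

/-- Summation by parts in each coordinate: differentiating the Poisson weights amounts to taking
forward differences of the coefficients. -/
lemma sum_pwD (m : ℝ) (M : ℕ) (c : (Fin n → ℕ) → F) (hc : ∀ j, (∃ i, M ≤ j i) → c j = 0)
    (v x : Fin n → ℝ) :
    ∑ j ∈ jbox n M, pwD m j v x • c j =
      ∑ j ∈ jbox n M, pw m j v • ∑ i, x i • (m • (c (j + Pi.single i 1) - c j)) := by
  have key : ∀ i, ∑ j ∈ jbox n M,
      ((∏ l ∈ univ.erase i, ps (j l) (m * v l)) * psPred (j i) (m * v i)) • c j =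
      ∑ j ∈ jbox n M, pw m j v • c (j + Pi.single i 1) := by
    intro i
    symm
    refine Finset.sum_bij_ne_zero (fun j _ _ => j + Pi.single i 1) ?_ ?_ ?_ ?_
    · intro j hj h
      rw [mem_jbox]
      by_contra hcon
      push Not at hcon
      exact h (by rw [hc _ hcon, smul_zero])
    · intro a _ _ b _ _ h
      exact add_right_cancel h
    · intro b hb h
      obtain ⟨r, hr⟩ : ∃ r, b i = r + 1 := by
        cases hbi : b i with
        | zero => exact absurd (by simp [hbi, psPred]) h
        | succ r => exact ⟨r, rfl⟩
      have hb' : Function.update b i r + Pi.single i 1 = b := by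
        ext l
        by_cases hl : l = i
        · subst hl; simp [hr]
        · simp [hl]
      have e : pw m (Function.update b i r) v =
          (∏ l ∈ univ.erase i, ps (b l) (m * v l)) * psPred (b i) (m * v i) := by
        rw [pw, ← Finset.prod_erase_mul _ _ (mem_univ i), hr]
        congr 1
        · refine prod_congr rfl fun l hl => ?_
          rw [Function.update_of_ne (ne_of_mem_erase hl)]
        · simp [psPred]
      refine ⟨Function.update b i r, ?_, ?_, hb'⟩
      · rw [mem_jbox] at hb ⊢
        intro l
        by_cases hl : l = i
        · subst hl; have := hb l; simp; omega
        · simpa [hl] using hb l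
      · rwa [hb', e]
    · intro a _ _
      rw [pw, ← Finset.prod_erase_mul _ _ (mem_univ i)]
      congr 2
      · refine prod_congr rfl fun l hl => ?_
        simp [ne_of_mem_erase hl]
      · simp [psPred]
  have e1 : ∀ j, pwD m j v x • c j = ∑ i, (x i * m) •
      (((∏ l ∈ univ.erase i, ps (j l) (m * v l)) * psPred (j i) (m * v i)) • c j -
        pw m j v • c j) := by
    intro j
    rw [pwD, _root_.sum_apply, Finset.sum_smul]
    refine sum_congr rfl fun i _ => ?_
    rw [pw, ← Finset.prod_erase_mul _ _ (mem_univ i), ← sub_smul, smul_smul (x i * m)]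
    congr 1
    simp only [_root_.smul_apply, ContinuousLinearMap.proj_apply, smul_eq_mul]
    ring
  simp only [e1]
  rw [Finset.sum_comm]
  simp only [Finset.smul_sum]
  rw [Finset.sum_comm (s := jbox n M)]
  refine sum_congr rfl fun i _ => ?_
  rw [← Finset.smul_sum, Finset.sum_sub_distrib, key i, ← Finset.sum_sub_distrib, Finset.smul_sum]
  refine sum_congr rfl fun j _ => ?_
  simp only [smul_sub, smul_smul]
  congr 2 <;> ring

/-- The node `j/m - 1`. -/
noncomputable def node (m : ℝ) (j : Fin n → ℕ) : Fin n → ℝ := fun i => j i / m - 1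

lemma node_shift (m : ℝ) (j : Fin n → ℕ) (i : Fin n) :
    node m (j + Pi.single i 1) = node m j + Pi.single i m⁻¹ := by
  ext l
  by_cases hl : l = i
  · subst hl; simp [node]; ring
  · simp [node, hl]

/-- The truncated Szász–Mirakyan operator on the orthant `x_i ≥ -1`:
`(S ψ)(x) = ∑_j ∏_i e^{-m(x_i+1)} (m(x_i+1))^{j_i} / j_i! · ψ(j/m - 1)`. -/
noncomputable def szasz (m : ℝ) (M : ℕ) (ψ : (Fin n → ℝ) → F) (x : Fin n → ℝ) : F :=
  ∑ j ∈ jbox n M, pw m j (x + 1) • ψ (node m j)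

lemma grad_apply (m : ℝ) (ψ : (Fin n → ℝ) → F) (u x : Fin n → ℝ) :
    grad m ψ u x = ∑ i, x i • (m • (ψ (u + Pi.single i m⁻¹) - ψ u)) := by
  rw [grad, _root_.sum_apply]; rfl

/-- The derivative of `S ψ` is `S` applied to the discrete gradient. The truncation of the sum
produces no boundary term because `ψ` vanishes at the nodes beyond `M`. -/
lemma hasFDerivAt_szasz {m : ℝ} (hm : 0 < m) {M : ℕ} {L : ℝ} (hM : L + 1 ≤ M / m)
    {ψ : (Fin n → ℝ) → F} (hL : ∀ u, (∃ i, L ≤ u i) → ψ u = 0) (x : Fin n → ℝ) :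
    HasFDerivAt (szasz m M ψ) (szasz m M (grad m ψ) x) x := by
  have h1 : HasFDerivAt (szasz m M ψ)
      (∑ j ∈ jbox n M, (pwD m j (x + 1)).smulRight (ψ (node m j))) x := by
    refine HasFDerivAt.fun_sum fun j _ => ?_
    refine HasFDerivAt.smul_const ?_ _
    exact (hasFDerivAt_comp_add_right (f := pw m j) 1).2 (hasFDerivAt_pw m j (x + 1))
  refine h1.congr_fderiv ?_
  ext y
  have hc : ∀ j : Fin n → ℕ, (∃ i, M ≤ j i) → ψ (node m j) = 0 := by
    rintro j ⟨i, hi⟩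
    refine hL _ ⟨i, ?_⟩
    have : (M : ℝ) / m ≤ j i / m := by gcongr
    simp only [node]; linarith
  have h2 := sum_pwD m M (fun j => ψ (node m j)) hc (x + 1) y
  rw [szasz, _root_.sum_apply, _root_.sum_apply]
  simp only [ContinuousLinearMap.smulRight_apply, _root_.smul_apply, grad_apply]
  rw [h2]
  simp only [node_shift]

/-- The operator approximates the identity with error `O(1/m)`: interpolate between `ψ(x)` and
`(S ψ)(x)` along `s ↦ ∑_j pw(s w) ψ(-1 + (1-s) w + j/m)` with `w = x + 1`, whose derivative is a
Poisson average of `(grad ψ - ψ')(w)`. -/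
lemma norm_szasz_sub {m : ℝ} (hm : 0 < m) {M : ℕ} (hM0 : 0 < M) {L : ℝ} (hM : L + 1 ≤ M / m)
    {ψ : (Fin n → ℝ) → F} (h : ContDiff ℝ ∞ ψ) (hL : ∀ u, (∃ i, L ≤ u i) → ψ u = 0)
    {B : ℝ} (hB : ∀ u, ‖iteratedFDeriv ℝ 2 ψ u‖ ≤ B) {x : Fin n → ℝ} (hx : ∀ i, -1 ≤ x i) :
    ‖szasz m M ψ x - ψ x‖ ≤ n * (B / m) * ‖x + 1‖ := by
  set w : Fin n → ℝ := x + 1 with hw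
  have hw0 : ∀ i, 0 ≤ w i := fun i => by have := hx i; simp [hw]; linarith
  have hd : Differentiable ℝ ψ := h.differentiable (by simp)
  let nd : (Fin n → ℕ) → ℝ → (Fin n → ℝ) := fun j s => (1 - s) • w + node m j
  let g : ℝ → F := fun s => ∑ j ∈ jbox n M, pw m j (s • w) • ψ (nd j s)
  have hg1 : g 1 = szasz m M ψ x := by simp [g, nd, szasz, hw]
  have hg0 : g 0 = ψ x := by
    have : ∀ j ∈ jbox n M, j ≠ 0 → pw m j ((0 : ℝ) • w) • ψ (nd j 0) = 0 := by
      intro j _ hj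
      obtain ⟨i, hi⟩ := Function.ne_iff.1 hj
      have : pw m j ((0 : ℝ) • w) = 0 := prod_eq_zero (mem_univ i) (by
        have hi' : j i ≠ 0 := hi
        simp [ps, hi'])
      rw [this, zero_smul]
    simp only [g]
    rw [Finset.sum_eq_single_of_mem 0 (mem_jbox.2 fun i => hM0) this]
    have e1 : pw m (0 : Fin n → ℕ) ((0 : ℝ) • w) = 1 := by simp [pw, ps]
    have e2 : nd 0 0 = x := by ext i; simp [nd, node, hw]
    rw [e1, e2, one_smul]
  have hg' : ∀ s ∈ Set.Icc (0 : ℝ) 1, HasDerivAt g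
      (∑ j ∈ jbox n M, pw m j (s • w) • (grad m ψ (nd j s) w - fderiv ℝ ψ (nd j s) w)) s := by
    intro s hs
    have h1 : HasDerivAt g (∑ j ∈ jbox n M, (pw m j (s • w) • (-(fderiv ℝ ψ (nd j s) w)) +
        (pwD m j (s • w) w) • ψ (nd j s))) s := by
      refine HasDerivAt.fun_sum fun j _ => ?_
      have a1 : HasDerivAt (fun s : ℝ => s • w) w s := by
        simpa using (hasDerivAt_id s).smul_const w
      have a2 := (hasFDerivAt_pw m j (s • w)).comp_hasDerivAt s a1
      have a3 : HasDerivAt (nd j) (-w) s := by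
        have : HasDerivAt (fun s : ℝ => (1 - s)) (-1) s := by
          simpa using (hasDerivAt_id s).const_sub 1
        simpa [nd] using (this.smul_const w).add_const (node m j)
      have a4 := (hd (nd j s)).hasFDerivAt.comp_hasDerivAt s a3
      have a5 := a2.smul a4
      rw [map_neg] at a5
      exact a5
    refine h1.congr_deriv ?_
    have hc : ∀ j : Fin n → ℕ, (∃ i, M ≤ j i) → ψ (nd j s) = 0 := by
      rintro j ⟨i, hi⟩
      refine hL _ ⟨i, ?_⟩
      have h1 : (M : ℝ) / m ≤ j i / m := by gcongr
      have h2 : 0 ≤ (1 - s) * w i := mul_nonneg (by linarith [hs.2]) (hw0 i)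
      simp only [nd, node, Pi.add_apply, Pi.smul_apply, smul_eq_mul]; linarith
    have h2 := sum_pwD m M (fun j => ψ (nd j s)) hc (s • w) w
    have h3 : ∀ j i, nd (j + Pi.single i 1) s = nd j s + Pi.single i m⁻¹ := by
      intro j i; simp only [nd, node_shift, add_assoc]
    simp only [h3] at h2
    rw [Finset.sum_add_distrib, h2, ← Finset.sum_add_distrib]
    refine sum_congr rfl fun j _ => ?_
    rw [grad_apply, smul_sub, smul_neg]
    abel
  have hb : ∀ s ∈ Set.Ico (0 : ℝ) 1,
      ‖∑ j ∈ jbox n M, pw m j (s • w) • (grad m ψ (nd j s) w - fderiv ℝ ψ (nd j s) w)‖ ≤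
        n * (B / m) * ‖w‖ := by
    intro s hs
    have hsw : ∀ i, 0 ≤ (s • w) i := fun i => mul_nonneg hs.1 (hw0 i)
    have hC : 0 ≤ n * (B / m) * ‖w‖ := by
      have : 0 ≤ B := (norm_nonneg _).trans (hB 0)
      positivity
    calc _ ≤ ∑ j ∈ jbox n M, pw m j (s • w) * (n * (B / m) * ‖w‖) := by
          refine norm_sum_le_of_le _ fun j _ => ?_
          rw [norm_smul, Real.norm_eq_abs, abs_of_nonneg (pw_nonneg hm.le j hsw)]
          refine mul_le_mul_of_nonneg_left ?_ (pw_nonneg hm.le j hsw)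
          have h1 := norm_iteratedFDeriv_grad_sub hm h 0 hB (nd j s)
          rw [norm_iteratedFDeriv_zero] at h1
          rw [← sub_apply]
          exact (ContinuousLinearMap.le_opNorm _ _).trans (by gcongr)
      _ = (∑ j ∈ jbox n M, pw m j (s • w)) * (n * (B / m) * ‖w‖) := by rw [Finset.sum_mul]
      _ ≤ 1 * (n * (B / m) * ‖w‖) := by gcongr; exact sum_pw_le hm.le M hsw
      _ = _ := one_mul _
  have := norm_image_sub_le_of_norm_deriv_le_segment_01'
    (fun s hs => (hg' s hs).hasDerivWithinAt) hb
  rwa [hg1, hg0] at this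

end

lemma szasz_contDiff {F : Type} [NormedAddCommGroup F] [NormedSpace ℝ F] (m : ℝ) (M : ℕ)
    (ψ : (Fin n → ℝ) → F) : ContDiff ℝ ∞ (szasz m M ψ) := by
  refine ContDiff.sum fun j _ => ContDiff.smul ?_ contDiff_const
  unfold pw ps
  refine contDiff_prod fun i _ => ?_
  have h : ContDiff ℝ ∞ fun x : Fin n → ℝ => m * (x + 1) i :=
    contDiff_const.mul ((contDiff_apply ℝ ℝ i).comp (contDiff_id.add contDiff_const))
  exact h.neg.exp.mul ((h.pow _).div_const _)

/-- All derivatives of `S ψ` converge to those of `ψ` at rate `1/m`, with a linear weight. Since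
`(S ψ)' = S (grad ψ)`, the order of differentiation is lowered by passing to
vector-valued functions. -/
lemma norm_iteratedFDeriv_szasz_sub (hn : 1 ≤ n) {m : ℝ} (hm : 0 < m) {M : ℕ} (hM0 : 0 < M)
    {L : ℝ} (hM : L + 1 ≤ M / m) (l : ℕ) :
    ∀ (F : Type) [NormedAddCommGroup F] [NormedSpace ℝ F] (ψ : (Fin n → ℝ) → F) (B : ℝ),
      ContDiff ℝ ∞ ψ → (∀ u, (∃ i, L ≤ u i) → ψ u = 0) →
      (∀ a ≤ l + 2, ∀ u, ‖iteratedFDeriv ℝ a ψ u‖ ≤ B) →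
      ∀ x : Fin n → ℝ, (∀ i, -1 ≤ x i) →
      ‖iteratedFDeriv ℝ l (fun x => szasz m M ψ x - ψ x) x‖ ≤
        (l + 1) * n ^ (l + 1) * B * (1 + ‖x + 1‖) / m := by
  induction l with
  | zero =>
    intro F _ _ ψ B h hL hB x hx
    rw [norm_iteratedFDeriv_zero]
    have hB0 : 0 ≤ B := (norm_nonneg _).trans (hB 0 (by simp) 0)
    refine (norm_szasz_sub hm hM0 hM h hL (hB 2 le_rfl) hx).trans ?_
    have : n * (B / m) * ‖x + 1‖ ≤ n * (B / m) * (1 + ‖x + 1‖) := by gcongr; linarith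
    refine this.trans (le_of_eq ?_)
    push_cast; ring
  | succ l ih =>
    intro F _ _ ψ B h hL hB x hx
    have hB0 : 0 ≤ B := (norm_nonneg _).trans (hB 0 (by simp) 0)
    have hn' : (1 : ℝ) ≤ n := by exact_mod_cast hn
    have hl : ((l : ℕ∞) : WithTop ℕ∞) ≤ ∞ := by exact_mod_cast le_top
    have hg := grad_contDiff m h
    have h1 : ContDiff ℝ ∞ fun x => szasz m M (grad m ψ) x - grad m ψ x :=
      (szasz_contDiff _ _ _).sub hg
    have h2 : ContDiff ℝ ∞ fun x => grad m ψ x - fderiv ℝ ψ x := hg.sub (fderiv_contDiff h)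
    have e : fderiv ℝ (fun x => szasz m M ψ x - ψ x) =
        (fun x => szasz m M (grad m ψ) x - grad m ψ x) +
          fun x => grad m ψ x - fderiv ℝ ψ x := by
      ext1 y
      refine (HasFDerivAt.fderiv ((hasFDerivAt_szasz hm hM hL y).sub
        ((h.differentiable (by simp)) y).hasFDerivAt)).trans ?_
      simp only [Pi.add_apply]
      abel
    have hgL : ∀ u, (∃ i, L ≤ u i) → grad m ψ u = 0 := by
      rintro u ⟨i, hi⟩
      ext w
      rw [grad_apply]
      refine Finset.sum_eq_zero fun l _ => ?_
      rw [hL u ⟨i, hi⟩, hL (u + (Pi.single l m⁻¹ : Fin n → ℝ)) ⟨i, ?_⟩]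
      · simp
      · have : (0 : ℝ) ≤ (Pi.single l m⁻¹ : Fin n → ℝ) i := by
          rw [Pi.single_apply]; split_ifs <;> positivity
        simp only [Pi.add_apply]; linarith
    rw [← norm_iteratedFDeriv_fderiv, e,
      iteratedFDeriv_add_apply (h1.of_le hl).contDiffAt (h2.of_le hl).contDiffAt]
    refine (norm_add_le _ _).trans ?_
    have b1 := ih _ (grad m ψ) (n * B) hg hgL (fun a ha u =>
      norm_iteratedFDeriv_grad hm h a (hB (a + 1) (by omega)) u) x hx
    have b2 := norm_iteratedFDeriv_grad_sub hm h l (hB (l + 2) (by omega)) x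
    have hP : (n : ℝ) ≤ n ^ (l + 1 + 1) := le_self_pow₀ hn' (by omega)
    calc _ ≤ (l + 1) * n ^ (l + 1) * (n * B) * (1 + ‖x + 1‖) / m + n * (B / m) := add_le_add b1 b2
      _ ≤ (l + 1) * n ^ (l + 1) * (n * B) * (1 + ‖x + 1‖) / m +
          n ^ (l + 1 + 1) * (B / m) * (1 + ‖x + 1‖) := by
        refine add_le_add le_rfl ?_
        have h1 : 0 ≤ B / m := by positivity
        calc (n : ℝ) * (B / m) ≤ n ^ (l + 1 + 1) * (B / m) := by gcongr
          _ ≤ _ := le_mul_of_one_le_right (by positivity) (by linarith [norm_nonneg (x + 1)])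
      _ = _ := by push_cast; ring

/-- The product `∏ (x_i + 1)^{j_i}`. -/
noncomputable def mono1 (j : Fin n → ℕ) (x : Fin n → ℝ) : ℂ := ∏ i, ((x i : ℂ) + 1) ^ j i

lemma mono1_temperate (j : Fin n → ℕ) : Function.HasTemperateGrowth (mono1 j) :=
  prod_temperate _ _ fun i _ => ((coordC_temperate i).add (.const 1)).pow _

/-- The coefficient `∏ e^{-m} m^{j_i} / j_i!`. -/
noncomputable def szCoef (m : ℝ) (j : Fin n → ℕ) : ℝ :=
  ∏ i, Real.exp (-m) * (m ^ j i / (j i).factorial)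

/-- The Schwartz function `E · S ψ`, where `E = expS n 1`, written as a combination of the
functions `∏ (x_i + 1)^{j_i} e^{-(m+1) ∑ x_i}` with coefficients the values of `ψ`. -/
noncomputable def szS (m : ℝ) (M : ℕ) (ψ : (Fin n → ℝ) → ℂ) : SchwartzMap (Fin n → ℝ) ℂ :=
  ∑ j ∈ jbox n M, (ψ (node m j) * szCoef m j) • smulT (mono1 j) (expS n (m + 1))

lemma szS_apply {m : ℝ} (hm : 0 < m) (M : ℕ) (ψ : (Fin n → ℝ) → ℂ) (x : Fin n → ℝ) :
    szS m M ψ x = expFun n 1 x * szasz m M ψ x := by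
  rw [szS, _root_.sum_apply, szasz, Finset.mul_sum]
  refine Finset.sum_congr rfl fun j _ => ?_
  have e : szCoef m j * (∏ i, (x i + 1) ^ j i) * expR n (m + 1) x = expR n 1 x * pw m j (x + 1) := by
    have : Real.exp (-(m + 1) * ∑ i, x i) =
        Real.exp (-1 * ∑ i, x i) * ∏ i, Real.exp (-(m * x i)) := by
      rw [← Real.exp_sum, ← Real.exp_add, Finset.sum_neg_distrib, ← Finset.mul_sum]
      congr 1; ring
    rw [expR, expR, this, szCoef, pw]
    have h2 : ∏ i, ps (j i) (m * (x + 1) i) = (∏ i, Real.exp (-m) * (m ^ j i / (j i).factorial)) *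
        (∏ i, (x i + 1) ^ j i) * ∏ i, Real.exp (-(m * x i)) := by
      rw [← Finset.prod_mul_distrib, ← Finset.prod_mul_distrib]
      refine Finset.prod_congr rfl fun i _ => ?_
      have : Real.exp (-(m * (x i + 1))) = Real.exp (-m) * Real.exp (-(m * x i)) := by
        rw [← Real.exp_add]; congr 1; ring
      simp only [ps, Pi.add_apply, Pi.one_apply]
      rw [this, mul_pow]; ring
    rw [h2]; ring
  have e' : ((szCoef m j : ℝ) : ℂ) * mono1 j x * expFun n (m + 1) x =
      expFun n 1 x * ((pw m j (x + 1) : ℝ) : ℂ) := by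
    rw [expFun_eq, expFun_eq, ← Complex.ofReal_mul, ← e, mono1]
    push_cast; ring
  rw [_root_.smul_apply, smulT_apply (mono1_temperate j), expS_apply (by linarith), smul_eq_mul,
    Complex.real_smul]
  linear_combination e' * ψ (node m j)

/-- `E · S_m ψ → E · ψ` in the Schwartz topology. -/
lemma tendsto_szS (hn : 1 ≤ n) (ψ : SchwartzMap (Fin n → ℝ) ℂ) (L : ℕ)
    (hL : ∀ u, (∃ i, (L : ℝ) ≤ u i) → ψ u = 0) :
    Filter.Tendsto (fun m : ℕ => szS (n := n) m (m * (L + 1)) ψ) Filter.atTop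
      (nhds (smulT ψ (expS n 1))) := by
  rw [(schwartz_withSeminorms ℝ (Fin n → ℝ) ℂ).tendsto_nhds]
  rintro ⟨K, N⟩ ε hε
  let B : ℝ := ∑ a ∈ range (N + 3), SchwartzMap.seminorm ℝ 0 a ψ
  have hB : ∀ a < N + 3, ∀ u, ‖iteratedFDeriv ℝ a ψ u‖ ≤ B := fun a ha u =>
    (SchwartzMap.norm_iteratedFDeriv_le_seminorm ℝ ψ a u).trans
      (Finset.single_le_sum (f := fun a => SchwartzMap.seminorm ℝ 0 a ψ)
        (fun a _ => apply_nonneg _ _) (mem_range.2 ha))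
  have hB0 : 0 ≤ B := (norm_nonneg _).trans (hB 0 (by simp) 0)
  let A : ℝ := (N + 1) * n ^ (N + 1) * B
  have hA0 : 0 ≤ A := by positivity
  let D : ℕ → ℝ := fun i => 2 * SchwartzMap.seminorm ℝ K i (expS n 1) +
    SchwartzMap.seminorm ℝ (K + 1) i (expS n 1)
  have hD0 : ∀ i, 0 ≤ D i := fun i => by positivity
  let C : ℝ := ∑ i ∈ range (N + 1), (N.choose i : ℝ) * D i * A
  have hC0 : 0 ≤ C := Finset.sum_nonneg fun i _ => by have := hD0 i; positivity
  have hn' : (1 : ℝ) ≤ n := by exact_mod_cast hn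
  have hE : (expS n 1 : (Fin n → ℝ) → ℂ) = expFun n 1 := funext fun x => expS_apply one_pos x
  filter_upwards [Filter.eventually_gt_atTop 0,
    (tendsto_const_div_atTop_nhds_zero_nat C).eventually (gt_mem_nhds hε)] with m hm0 hmε
  have hm : (0 : ℝ) < m := by exact_mod_cast hm0
  refine lt_of_le_of_lt ?_ hmε
  have hCm : 0 ≤ C / m := by positivity
  refine SchwartzMap.seminorm_le_bound ℝ K N _ hCm fun x => ?_
  have ef : (⇑(szS (n := n) m (m * (L + 1)) ψ - smulT ψ (expS n 1)) : (Fin n → ℝ) → ℂ) =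
      fun x => expFun n 1 x * (szasz m (m * (L + 1)) ψ x - ψ x) := by
    ext x
    rw [_root_.sub_apply, szS_apply hm, smulT_apply ψ.hasTemperateGrowth, expS_apply one_pos]
    ring
  rw [ef]
  by_cases hx : ∃ i, x i < -1
  · obtain ⟨i, hi⟩ := hx
    rw [iteratedFDeriv_zero_of_lt _ N hi]
    · simpa using hCm
    · rintro y ⟨i, hi⟩
      rw [expFun_eq, expR_zero 1 hi]; simp
  push Not at hx
  have hM0 : 0 < m * (L + 1) := by positivity
  have hM : (L : ℝ) + 1 ≤ ((m * (L + 1) : ℕ) : ℝ) / m := by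
    push_cast; rw [mul_div_cancel_left₀ _ hm.ne']
  have hψ : ContDiff ℝ ∞ ψ := ψ.smooth _
  have hS : ContDiff ℝ ∞ fun x => szasz (n := n) m (m * (L + 1)) ψ x - ψ x :=
    (szasz_contDiff _ _ _).sub hψ
  have hx1 : ‖x + 1‖ ≤ ‖x‖ + 1 := by
    refine (norm_add_le _ _).trans ?_
    gcongr
    rw [pi_norm_le_iff_of_nonneg zero_le_one]
    simp
  have hl : ((N : ℕ∞) : WithTop ℕ∞) ≤ ∞ := by exact_mod_cast le_top
  have hmul := norm_iteratedFDeriv_mul_le (expFun_contDiff (n := n) 1) hS x (n := N) hl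
  calc _ ≤ ‖x‖ ^ K * ∑ i ∈ range (N + 1), (N.choose i : ℝ) * ‖iteratedFDeriv ℝ i (expFun n 1) x‖ *
        (A * (2 + ‖x‖) / m) := by
        refine mul_le_mul_of_nonneg_left (hmul.trans ?_) (by positivity)
        refine Finset.sum_le_sum fun i hi => ?_
        refine mul_le_mul_of_nonneg_left ?_ (by positivity)
        refine (norm_iteratedFDeriv_szasz_sub hn hm hM0 hM (N - i) ℂ ψ B hψ hL
          (fun a ha u => hB a (by omega) u) x hx).trans ?_
        have h1 : ((N - i : ℕ) : ℝ) ≤ N := by exact_mod_cast Nat.sub_le _ _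
        have h2 : (n : ℝ) ^ (N - i + 1) ≤ n ^ (N + 1) := pow_le_pow_right₀ hn' (by omega)
        have h3 : 1 + ‖x + 1‖ ≤ 2 + ‖x‖ := by linarith
        simp only [A]
        gcongr
    _ = ∑ i ∈ range (N + 1), (N.choose i : ℝ) *
        (2 * (‖x‖ ^ K * ‖iteratedFDeriv ℝ i (expFun n 1) x‖) +
          ‖x‖ ^ (K + 1) * ‖iteratedFDeriv ℝ i (expFun n 1) x‖) * A / m := by
        rw [Finset.mul_sum]
        refine Finset.sum_congr rfl fun i _ => ?_
        ring
    _ ≤ ∑ i ∈ range (N + 1), (N.choose i : ℝ) * D i * A / m := by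
        refine Finset.sum_le_sum fun i _ => ?_
        have h1 := SchwartzMap.le_seminorm ℝ K i (expS n 1) x
        have h2 := SchwartzMap.le_seminorm ℝ (K + 1) i (expS n 1) x
        rw [hE] at h1 h2
        simp only [D]
        gcongr
    _ = C / m := by rw [Finset.sum_div]

/-! ### From moments to positivity -/

lemma bump_bound (b : ContDiffBump (0 : Fin n → ℝ)) (i : ℕ) : ∃ C : ℝ, 0 ≤ C ∧
    ∀ x, ‖iteratedFDeriv ℝ i (fun x => ((1 - b x : ℝ) : ℂ)) x‖ ≤ C := by
  let g : (Fin n → ℝ) → ℂ := fun x => ((b x : ℝ) : ℂ)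
  have hg : ContDiff ℝ ∞ g := Complex.ofRealCLM.contDiff.comp b.contDiff
  have hgc : HasCompactSupport g := b.hasCompactSupport.comp_left
    (g := fun y : ℝ => (y : ℂ)) Complex.ofReal_zero
  have h1 : (fun x => ((1 - b x : ℝ) : ℂ)) = (fun _ => (1 : ℂ)) - g := by ext x; simp [g]
  have hi : ((i : ℕ∞) : WithTop ℕ∞) ≤ ∞ := by exact_mod_cast le_top
  obtain ⟨C1, hC1⟩ := (hgc.iteratedFDeriv (𝕜 := ℝ) i).exists_bound_of_continuous
    (hg.continuous_iteratedFDeriv hi)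
  have hC0 : 0 ≤ C1 := (norm_nonneg _).trans (hC1 0)
  refine ⟨1 + C1, by positivity, fun x => ?_⟩
  rw [h1, iteratedFDeriv_sub_apply contDiffAt_const (hg.of_le hi).contDiffAt]
  refine (norm_sub_le _ _).trans (add_le_add ?_ (hC1 x))
  cases i with
  | zero => simp
  | succ i => rw [iteratedFDeriv_succ_const]; simp

/-- Smooth truncations `φ · b(x/N)` of a Schwartz function converge to it. -/
lemma tendsto_cutoff (b : ContDiffBump (0 : Fin n → ℝ)) (φ : SchwartzMap (Fin n → ℝ) ℂ)
    (Φ : ℕ → SchwartzMap (Fin n → ℝ) ℂ)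
    (hΦ : ∀ N x, Φ N x = ((b (((N : ℝ) + 1)⁻¹ • x) : ℝ) : ℂ) * φ x) :
    Filter.Tendsto Φ Filter.atTop (nhds φ) := by
  let c : (Fin n → ℝ) → ℂ := fun x => ((1 - b x : ℝ) : ℂ)
  have hc : ContDiff ℝ ∞ c := Complex.ofRealCLM.contDiff.comp (contDiff_const.sub b.contDiff)
  have hc0 : ∀ x ∈ Metric.ball (0 : Fin n → ℝ) b.rIn, c x = 0 := fun x hx => by
    simp [c, b.one_of_mem_closedBall (Metric.ball_subset_closedBall hx)]
  have hbd := bump_bound b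
  choose C hC0 hC using hbd
  rw [(schwartz_withSeminorms ℝ (Fin n → ℝ) ℂ).tendsto_nhds]
  rintro ⟨K, l⟩ ε hε
  let D : ℝ := (∑ i ∈ range (l + 1), (l.choose i : ℝ) * C i *
    SchwartzMap.seminorm ℝ (K + 1) (l - i) φ) / b.rIn
  have hr := b.rIn_pos
  have hD0 : 0 ≤ D := div_nonneg (Finset.sum_nonneg fun i _ => by
    have := hC0 i; positivity) hr.le
  filter_upwards [(tendsto_const_div_atTop_nhds_zero_nat D).eventually (gt_mem_nhds hε),
    Filter.eventually_gt_atTop 0] with N hNε hN0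
  have hN : (0 : ℝ) < N := by exact_mod_cast hN0
  refine lt_of_le_of_lt ?_ hNε
  refine SchwartzMap.seminorm_le_bound ℝ K l _ (by positivity) fun x => ?_
  let s : ℝ := ((N : ℝ) + 1)⁻¹
  have hs0 : 0 < s := by positivity
  have hs1 : s ≤ 1 := inv_le_one_of_one_le₀ (by linarith)
  have ef : (⇑(Φ N - φ) : (Fin n → ℝ) → ℂ) = -fun x => c (s • x) * φ x := by
    ext x
    rw [_root_.sub_apply, hΦ]
    simp only [c, Pi.neg_apply, s]
    push_cast; ring
  rw [ef, iteratedFDeriv_neg_apply, norm_neg]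
  have hcs : ContDiff ℝ ∞ fun x => c (s • x) := hc.comp (contDiff_const_smul s)
  -- The error vanishes near the origin; elsewhere one extra power of `‖x‖` gains the factor `1 / N`.
  by_cases hx : ‖x‖ < N * b.rIn
  · have hev : (fun x => c (s • x) * φ x) =ᶠ[nhds x] fun _ => 0 := by
      filter_upwards [continuous_norm.continuousAt.eventually_lt continuousAt_const hx] with y hy
      have : s • y ∈ Metric.ball (0 : Fin n → ℝ) b.rIn := by
        rw [mem_ball_zero_iff, norm_smul, Real.norm_eq_abs, abs_of_pos hs0]
        calc s * ‖y‖ ≤ s * (N * b.rIn) := by gcongr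
          _ < s * (((N : ℝ) + 1) * b.rIn) := by gcongr; linarith
          _ = b.rIn := by simp only [s]; field_simp
      rw [hc0 _ this, zero_mul]
    rw [(hev.iteratedFDeriv ℝ l).eq_of_nhds]
    simp only [iteratedFDeriv_fun_zero, Pi.zero_apply, norm_zero, mul_zero]
    positivity
  · push Not at hx
    have hl : ((l : ℕ∞) : WithTop ℕ∞) ≤ ∞ := by exact_mod_cast le_top
    have hmul := norm_iteratedFDeriv_mul_le hcs (φ.smooth ⊤) x (n := l) hl
    have hx1 : 1 ≤ ‖x‖ / (N * b.rIn) := by rwa [one_le_div (by positivity)]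
    calc _ ≤ ‖x‖ ^ K * ∑ i ∈ range (l + 1), (l.choose i : ℝ) * C i *
          ‖iteratedFDeriv ℝ (l - i) φ x‖ := by
          refine mul_le_mul_of_nonneg_left (hmul.trans ?_) (by positivity)
          refine Finset.sum_le_sum fun i _ => ?_
          have hi : ((i : ℕ∞) : WithTop ℕ∞) ≤ ∞ := by exact_mod_cast le_top
          gcongr
          rw [iteratedFDeriv_comp_const_smul s (hc.of_le hi), norm_smul, norm_pow,
            Real.norm_eq_abs, abs_of_pos hs0]
          exact (mul_le_of_le_one_left (norm_nonneg _) (pow_le_one₀ hs0.le hs1)).trans (hC i _)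
      _ ≤ (‖x‖ ^ K * ∑ i ∈ range (l + 1), (l.choose i : ℝ) * C i *
          ‖iteratedFDeriv ℝ (l - i) φ x‖) * (‖x‖ / (N * b.rIn)) := by
          refine le_mul_of_one_le_right ?_ hx1
          have := hC0
          exact mul_nonneg (by positivity) (Finset.sum_nonneg fun i _ =>
            mul_nonneg (mul_nonneg (by positivity) (hC0 i)) (norm_nonneg _))
      _ = (∑ i ∈ range (l + 1), (l.choose i : ℝ) * C i *
          (‖x‖ ^ (K + 1) * ‖iteratedFDeriv ℝ (l - i) φ x‖)) / (N * b.rIn) := by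
          rw [pow_succ, Finset.mul_sum, Finset.sum_mul, Finset.sum_div]
          refine Finset.sum_congr rfl fun i _ => ?_
          ring
      _ ≤ (∑ i ∈ range (l + 1), (l.choose i : ℝ) * C i *
          SchwartzMap.seminorm ℝ (K + 1) (l - i) φ) / (N * b.rIn) := by
          gcongr with i _
          · exact mul_nonneg (by positivity) (hC0 i)
          · exact SchwartzMap.le_seminorm ℝ (K + 1) (l - i) φ x
      _ = D / N := by simp only [D]; field_simp

open scoped ComplexOrder in
lemma nonneg_iff_re_im (z : ℂ) : 0 ≤ z ↔ 0 ≤ z.re ∧ z.im = 0 := by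
  rw [Complex.nonneg_iff, eq_comm (a := (0 : ℝ))]

lemma isClosed_re_im : IsClosed {z : ℂ | 0 ≤ z.re ∧ z.im = 0} :=
  (isClosed_le continuous_const Complex.continuous_re).inter
    (isClosed_eq Complex.continuous_im continuous_const)

section

variable {T : SchwartzMap (Fin n → ℝ) ℂ →L[ℂ] ℂ}

open scoped ComplexOrder in
/-- Nonnegativity on monomials times exponentials extends to shifted monomials by the binomial
theorem. -/
lemma nonneg_mono1
    (hT : ∀ t : ℝ, 0 < t → ∀ α : Fin n → ℕ, 0 ≤ T (smulT (mono α) (expS n t)))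
    {t : ℝ} (ht : 0 < t) (j : Fin n → ℕ) : 0 ≤ T (smulT (mono1 j) (expS n t)) := by
  have e : smulT (mono1 j) (expS n t) =
      ∑ α ∈ Fintype.piFinset fun i => range (j i + 1),
        ((∏ i, (j i).choose (α i) : ℕ) : ℂ) • smulT (mono α) (expS n t) := by
    ext x
    rw [smulT_apply (mono1_temperate j), _root_.sum_apply, mono1]
    simp only [add_pow, one_pow, mul_one]
    rw [Finset.prod_univ_sum, Finset.sum_mul]
    refine Finset.sum_congr rfl fun α _ => ?_
    rw [_root_.smul_apply, smulT_apply (mono_temperate α), mono, Finset.prod_mul_distrib,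
      smul_eq_mul]
    push_cast; ring
  rw [e, map_sum]
  refine Finset.sum_nonneg fun α _ => ?_
  rw [map_smul, smul_eq_mul]
  exact mul_nonneg (Nat.cast_nonneg _) (hT t ht α)

open scoped ComplexOrder in
lemma nonneg_szS
    (hT : ∀ t : ℝ, 0 < t → ∀ α : Fin n → ℕ, 0 ≤ T (smulT (mono α) (expS n t)))
    {m : ℝ} (hm : 0 ≤ m) (M : ℕ) {ψ : (Fin n → ℝ) → ℂ} (hψ : ∀ x, 0 ≤ ψ x) :
    0 ≤ T (szS m M ψ) := by
  rw [szS, map_sum]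
  refine Finset.sum_nonneg fun j _ => ?_
  rw [map_smul, smul_eq_mul]
  refine mul_nonneg (mul_nonneg (hψ _) ?_) (nonneg_mono1 hT (by linarith) j)
  rw [Complex.zero_le_real, szCoef]
  positivity

open scoped ComplexOrder in
/-- Positivity on compactly supported `φ`: on the orthant `φ = E ψ` with `ψ = φ e^{∑x}`, and
`E · S_m ψ` converges to `E ψ`. -/
lemma nonneg_of_compact (hn : 1 ≤ n)
    (hloc : ∀ φ ψ : SchwartzMap (Fin n → ℝ) ℂ, (∀ x ∈ Rplus n, φ x = ψ x) → T φ = T ψ)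
    (hT : ∀ t : ℝ, 0 < t → ∀ α : Fin n → ℕ, 0 ≤ T (smulT (mono α) (expS n t)))
    (φ : SchwartzMap (Fin n → ℝ) ℂ) (hφ : ∀ x, 0 ≤ φ x) (hc : HasCompactSupport φ) :
    0 ≤ T φ := by
  have hex : ContDiff ℝ ∞ fun x : Fin n → ℝ => ((Real.exp (∑ i, x i) : ℝ) : ℂ) :=
    Complex.ofRealCLM.contDiff.comp (ContDiff.sum fun i _ => contDiff_apply ℝ ℝ i).exp
  have hc' : HasCompactSupport fun x : Fin n → ℝ => φ x * ((Real.exp (∑ i, x i) : ℝ) : ℂ) :=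
    hc.mul_right
  let ψ : SchwartzMap (Fin n → ℝ) ℂ := hc'.toSchwartzMap ((φ.smooth ⊤).mul hex)
  have hψ : ∀ x, ψ x = φ x * ((Real.exp (∑ i, x i) : ℝ) : ℂ) := fun _ => rfl
  obtain ⟨L, hL⟩ : ∃ L : ℕ, ∀ u, (∃ i, (L : ℝ) ≤ u i) → ψ u = 0 := by
    obtain ⟨r, hr⟩ := hc'.isCompact.isBounded.exists_norm_le
    obtain ⟨L, hL⟩ := exists_nat_gt r
    refine ⟨L, fun u ⟨i, hi⟩ => ?_⟩
    refine image_eq_zero_of_notMem_tsupport (f := ψ) fun hu => ?_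
    have h1 := hr u hu
    have h2 := norm_le_pi_norm u i
    have h3 := le_abs_self (u i)
    rw [Real.norm_eq_abs] at h2
    linarith
  have e : T φ = T (smulT ψ (expS n 1)) := by
    refine hloc _ _ fun x hx => ?_
    rw [smulT_apply ψ.hasTemperateGrowth, expS_apply one_pos, expFun_eq,
      expR_eq 1 (fun i => (hx i).le), hψ, mul_assoc, ← Complex.ofReal_mul, ← Real.exp_add]
    simp
  rw [e]
  have hlim := (T.continuous.tendsto _).comp (tendsto_szS hn ψ L hL)
  rw [nonneg_iff_re_im]
  refine isClosed_re_im.mem_of_tendsto hlim (Filter.Eventually.of_forall fun m => ?_)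
  refine (nonneg_iff_re_im _).1 (nonneg_szS hT m.cast_nonneg _ fun x => ?_)
  rw [hψ]
  exact mul_nonneg (hφ x) (Complex.zero_le_real.2 (Real.exp_pos _).le)

open scoped ComplexOrder in
/-- A distribution supported in the closed orthant is positive as soon as it is nonnegative on all
products of a monomial and an exponential `e^{-t ∑ x_i}`. -/
lemma isPos_of_mono (hn : 1 ≤ n)
    (hloc : ∀ φ ψ : SchwartzMap (Fin n → ℝ) ℂ, (∀ x ∈ Rplus n, φ x = ψ x) → T φ = T ψ)
    (hT : ∀ t : ℝ, 0 < t → ∀ α : Fin n → ℕ, 0 ≤ T (smulT (mono α) (expS n t))) :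
    IsPos T := by
  intro φ hφ
  let b : ContDiffBump (0 : Fin n → ℝ) := ⟨1, 2, one_pos, one_lt_two⟩
  have hg : ∀ N : ℕ, ContDiff ℝ ∞ fun x : Fin n → ℝ => ((b (((N : ℝ) + 1)⁻¹ • x) : ℝ) : ℂ) :=
    fun N => Complex.ofRealCLM.contDiff.comp (b.contDiff.comp (contDiff_const_smul _))
  have hgc : ∀ N : ℕ, HasCompactSupport fun x : Fin n → ℝ =>
      ((b (((N : ℝ) + 1)⁻¹ • x) : ℝ) : ℂ) := fun N =>
    (b.hasCompactSupport.comp_smul (by positivity)).comp_left (g := fun y : ℝ => (y : ℂ))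
      Complex.ofReal_zero
  let Φ : ℕ → SchwartzMap (Fin n → ℝ) ℂ := fun N =>
    (hgc N).mul_right.toSchwartzMap ((hg N).mul (φ.smooth ⊤))
  have hΦ : ∀ N x, Φ N x = ((b (((N : ℝ) + 1)⁻¹ • x) : ℝ) : ℂ) * φ x := fun _ _ => rfl
  have hlim := (T.continuous.tendsto _).comp (tendsto_cutoff b φ Φ hΦ)
  refine isClosed_re_im.mem_of_tendsto hlim (Filter.Eventually.of_forall fun N => ?_)
  refine (nonneg_iff_re_im _).1 (nonneg_of_compact hn hloc hT (Φ N) (fun x => ?_)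
    (hgc N).mul_right)
  rw [hΦ]
  exact mul_nonneg (Complex.zero_le_real.2 b.nonneg) ((nonneg_iff_re_im _).2 (hφ x))

end

/-- The two cases of the Wallach set are treated together by a rank `r`: the index of the
discrete point, or `r = n` on the half-line. -/
lemma isPos_of_wallach (hn : 2 ≤ n) {k : ℝ} (hk : 0 < k)
    {R : ℂ → (SchwartzMap (Fin n → ℝ) ℂ →L[ℂ] ℂ)} (hR : IsRieszFamily n k R) {m : ℝ}
    (hm : (∃ r : ℕ, r ≤ n - 1 ∧ m = k * r) ∨ k * ((n : ℝ) - 1) < m) : IsPos (R m) := by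
  refine isPos_of_mono (by omega) (fun φ ψ h => riesz_local hR h m) fun t ht α => ?_
  obtain ⟨r, h1, h2⟩ : ∃ r : ℕ, k * ((r : ℝ) - 1) ≤ m ∧ (r < n → m = k * r) := by
    rcases hm with ⟨r, -, h⟩ | h
    · exact ⟨r, by rw [h]; nlinarith, fun _ => h⟩
    · exact ⟨n, h.le, fun h => absurd h (lt_irrefl _)⟩
  obtain ⟨c, hc, h⟩ := Lm_nonneg hk hR ht r h1 h2 _ α rfl
  rw [Lm] at h
  rw [h, nonneg_iff_re_im]
  exact ⟨hc, rfl⟩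

end Riesz

/-- Gindikin-type characterization: `R_μ` is a positive measure (nonnegative on
every real-valued nonnegative Schwartz function) if and only if `μ` is real and lies in the
generalized Wallach set `W_k = {0, k, 2k, …, k(n-1)} ∪ (k(n-1), ∞)`. -/
theorem riesz_positive_iff_wallach (n : ℕ) (hn : 2 ≤ n) (k : ℝ) (hk : 0 < k)
    (R : ℂ → (SchwartzMap (Fin n → ℝ) ℂ →L[ℂ] ℂ)) (hR : IsRieszFamily n k R)
    (μ : ℂ) :
    (∀ φ : SchwartzMap (Fin n → ℝ) ℂ, (∀ x, 0 ≤ (φ x).re ∧ (φ x).im = 0) →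
      0 ≤ (R μ φ).re ∧ (R μ φ).im = 0) ↔
    (μ.im = 0 ∧
      ((∃ r : ℕ, r ≤ n - 1 ∧ μ.re = k * r) ∨ k * ((n : ℝ) - 1) < μ.re)) := by
  refine ⟨fun h => wallach_of_isPos hn hk hR h, fun ⟨h0, h⟩ => ?_⟩
  have hμ : μ = (μ.re : ℂ) := Complex.ext rfl h0
  rw [hμ]
  exact isPos_of_wallach hn hk hR h
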